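/- arXiv:2001.09688 — 8 statements merged into one kernel-verified Lean document; each statement's English description precedes it below -/
import Mathlib

section
/- Let p1, p2, p3, q1, q2, q3 be reals with p1, p2, p3 pairwise distinct, q1, q2, q3 pairwise distinct, and p_i ≠ q_j for all i, j, and let X1, X2, X3 ∈ S. Assume all trace denominators and α-factors occurring in the compositions below are nonzero. Then the mixed Yang–Baxter equation holds: Tinv_{23}(2,3) ∘ R_{13}(1,3) ∘ T_{12}(1,2) = T_{12}(1,2) ∘ R_{13}(1,3) ∘ Tinv_{23}(2,3) as maps on the triple (X1,X2,X3), where the subscripts indicate on which two components of the triple the maps R(p_i,q_i;p_j,q_j), T(p_i,q_i;p_j,q_j), Tinv(p_i,q_i;p_j,q_j) act. -/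
open Matrix

/-- The space of real `m × n` matrices. -/
abbrev Mat (m n : ℕ) := Matrix (Fin m) (Fin n) ℝ

/-- `X` is a rank-one `K`-projection, i.e. `X ∈ S`. -/
def InS {m n : ℕ} (K : Matrix (Fin n) (Fin m) ℝ) (X : Mat m n) : Prop :=
  X * K * X = X ∧ X.rank = 1

/-- `A(p,q,λ,X) = 1ₘ − ((p−q)/(λ−q)) X K`. -/
noncomputable def Amat {m n : ℕ} (K : Matrix (Fin n) (Fin m) ℝ) (p q lam : ℝ) (X : Mat m n) :
    Matrix (Fin m) (Fin m) ℝ :=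
  1 - ((p - q) / (lam - q)) • (X * K)

/-- `Ã(p,q,λ,X) = 1ₙ − ((p−q)/(λ−q)) K X`. -/
noncomputable def Atil {m n : ℕ} (K : Matrix (Fin n) (Fin m) ℝ) (p q lam : ℝ) (X : Mat m n) :
    Matrix (Fin n) (Fin n) ℝ :=
  1 - ((p - q) / (lam - q)) • (K * X)

/-- `B(p,q,λ,X) = 1ₘ + ((p−q)/(λ−p)) X K`. -/
noncomputable def Bmat {m n : ℕ} (K : Matrix (Fin n) (Fin m) ℝ) (p q lam : ℝ) (X : Mat m n) :
    Matrix (Fin m) (Fin m) ℝ :=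
  1 + ((p - q) / (lam - p)) • (X * K)

/-- `B̃(p,q,λ,X) = 1ₙ + ((p−q)/(λ−p)) K X`. -/
noncomputable def Btil {m n : ℕ} (K : Matrix (Fin n) (Fin m) ℝ) (p q lam : ℝ) (X : Mat m n) :
    Matrix (Fin n) (Fin n) ℝ :=
  1 + ((p - q) / (lam - p)) • (K * X)

/-- `α₁₂⁻¹ = 1 − ((p1−q1)(p2−q2))/((p2−p1)(q2−q1)) · tr(K X1 K X2)`. -/
noncomputable def adenom {m n : ℕ} (K : Matrix (Fin n) (Fin m) ℝ) (p1 q1 p2 q2 : ℝ)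
    (X1 X2 : Mat m n) : ℝ :=
  1 - (p1 - q1) * (p2 - q2) / ((p2 - p1) * (q2 - q1)) * (K * X1 * K * X2).trace

/-- The Yang–Baxter map `R(p1,q1;p2,q2)`. -/
noncomputable def Rmap {m n : ℕ} (K : Matrix (Fin n) (Fin m) ℝ) (p1 q1 p2 q2 : ℝ)
    (X : Mat m n × Mat m n) : Mat m n × Mat m n :=
  ((adenom K p1 q1 p2 q2 X.1 X.2)⁻¹ •
      ((1 - ((p2 - q2) / (p2 - p1)) • (X.2 * K)) * X.1 *
        (1 - ((p2 - q2) / (q1 - q2)) • (K * X.2))),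
   (adenom K p1 q1 p2 q2 X.1 X.2)⁻¹ •
      ((1 - ((p1 - q1) / (q2 - q1)) • (X.1 * K)) * X.2 *
        (1 - ((p1 - q1) / (p1 - p2)) • (K * X.1))))

/-- Trace denominator of the first component of the map `T`:
`tr[A₂(p1,X2) X1 B̃₂(q1,X2) K]`. -/
noncomputable def Tden1 {m n : ℕ} (K : Matrix (Fin n) (Fin m) ℝ) (p1 q1 p2 q2 : ℝ)
    (X1 X2 : Mat m n) : ℝ :=
  (Amat K p2 q2 p1 X2 * X1 * Btil K p2 q2 q1 X2 * K).trace

/-- Trace denominator of the second component of the map `T`: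
`tr[A₁(p2,X1) X2 B̃₁(q2,X1) K]`. -/
noncomputable def Tden2 {m n : ℕ} (K : Matrix (Fin n) (Fin m) ℝ) (p1 q1 p2 q2 : ℝ)
    (X1 X2 : Mat m n) : ℝ :=
  (Amat K p1 q1 p2 X1 * X2 * Btil K p1 q1 q2 X1 * K).trace

/-- The (non-Yang–Baxter) map `T(p1,q1;p2,q2)`. -/
noncomputable def Tmap {m n : ℕ} (K : Matrix (Fin n) (Fin m) ℝ) (p1 q1 p2 q2 : ℝ)
    (X : Mat m n × Mat m n) : Mat m n × Mat m n :=
  ((Tden1 K p1 q1 p2 q2 X.1 X.2)⁻¹ • (Amat K p2 q2 p1 X.2 * X.1 * Btil K p2 q2 q1 X.2),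
   (Tden2 K p1 q1 p2 q2 X.1 X.2)⁻¹ • (Amat K p1 q1 p2 X.1 * X.2 * Btil K p1 q1 q2 X.1))

/-- Trace denominator of the first component of `T⁻¹`: `tr[B₂(q1,X2) X1 Ã₂(p1,X2) K]`. -/
noncomputable def Tinvden1 {m n : ℕ} (K : Matrix (Fin n) (Fin m) ℝ) (p1 q1 p2 q2 : ℝ)
    (X1 X2 : Mat m n) : ℝ :=
  (Bmat K p2 q2 q1 X2 * X1 * Atil K p2 q2 p1 X2 * K).trace

/-- Trace denominator of the second component of `T⁻¹`: `tr[B₁(q2,X1) X2 Ã₁(p2,X1) K]`. -/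
noncomputable def Tinvden2 {m n : ℕ} (K : Matrix (Fin n) (Fin m) ℝ) (p1 q1 p2 q2 : ℝ)
    (X1 X2 : Mat m n) : ℝ :=
  (Bmat K p1 q1 q2 X1 * X2 * Atil K p1 q1 p2 X1 * K).trace

/-- The map `Tinv(p1,q1;p2,q2)`, the inverse of `T(p1,q1;p2,q2)`. -/
noncomputable def Tinvmap {m n : ℕ} (K : Matrix (Fin n) (Fin m) ℝ) (p1 q1 p2 q2 : ℝ)
    (X : Mat m n × Mat m n) : Mat m n × Mat m n :=
  ((Tinvden1 K p1 q1 p2 q2 X.1 X.2)⁻¹ • (Bmat K p2 q2 q1 X.2 * X.1 * Atil K p2 q2 p1 X.2),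
   (Tinvden2 K p1 q1 p2 q2 X.1 X.2)⁻¹ • (Bmat K p1 q1 q2 X.1 * X.2 * Atil K p1 q1 p2 X.1))

/-- Trace denominator of the first component of `R⁻¹`: `tr[A₂(q1,X2) X1 B̃₂(p1,X2) K]`. -/
noncomputable def Rinvden1 {m n : ℕ} (K : Matrix (Fin n) (Fin m) ℝ) (p1 q1 p2 q2 : ℝ)
    (X1 X2 : Mat m n) : ℝ :=
  (Amat K p2 q2 q1 X2 * X1 * Btil K p2 q2 p1 X2 * K).trace

/-- Trace denominator of the second component of `R⁻¹`: `tr[B₁(p2,X1) X2 Ã₁(q2,X1) K]`. -/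
noncomputable def Rinvden2 {m n : ℕ} (K : Matrix (Fin n) (Fin m) ℝ) (p1 q1 p2 q2 : ℝ)
    (X1 X2 : Mat m n) : ℝ :=
  (Bmat K p1 q1 p2 X1 * X2 * Atil K p1 q1 q2 X1 * K).trace

/-- The map `Rinv(p1,q1;p2,q2)`, the inverse of `R(p1,q1;p2,q2)`. -/
noncomputable def Rinvmap {m n : ℕ} (K : Matrix (Fin n) (Fin m) ℝ) (p1 q1 p2 q2 : ℝ)
    (X : Mat m n × Mat m n) : Mat m n × Mat m n :=
  ((Rinvden1 K p1 q1 p2 q2 X.1 X.2)⁻¹ • (Amat K p2 q2 q1 X.2 * X.1 * Btil K p2 q2 p1 X.2),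
   (Rinvden2 K p1 q1 p2 q2 X.1 X.2)⁻¹ • (Bmat K p1 q1 p2 X.1 * X.2 * Atil K p1 q1 q2 X.1))

/-- `R` acting on components 1 and 2 of a triple. -/
noncomputable def R12t {m n : ℕ} (K : Matrix (Fin n) (Fin m) ℝ) (p1 q1 p2 q2 : ℝ)
    (X : Mat m n × Mat m n × Mat m n) : Mat m n × Mat m n × Mat m n :=
  ((Rmap K p1 q1 p2 q2 (X.1, X.2.1)).1, (Rmap K p1 q1 p2 q2 (X.1, X.2.1)).2, X.2.2)

/-- `R` acting on components 1 and 3 of a triple. -/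
noncomputable def R13t {m n : ℕ} (K : Matrix (Fin n) (Fin m) ℝ) (p1 q1 p3 q3 : ℝ)
    (X : Mat m n × Mat m n × Mat m n) : Mat m n × Mat m n × Mat m n :=
  ((Rmap K p1 q1 p3 q3 (X.1, X.2.2)).1, X.2.1, (Rmap K p1 q1 p3 q3 (X.1, X.2.2)).2)

/-- `R` acting on components 2 and 3 of a triple. -/
noncomputable def R23t {m n : ℕ} (K : Matrix (Fin n) (Fin m) ℝ) (p2 q2 p3 q3 : ℝ)
    (X : Mat m n × Mat m n × Mat m n) : Mat m n × Mat m n × Mat m n :=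
  (X.1, Rmap K p2 q2 p3 q3 (X.2.1, X.2.2))

/-- `T` acting on components 1 and 2 of a triple. -/
noncomputable def T12t {m n : ℕ} (K : Matrix (Fin n) (Fin m) ℝ) (p1 q1 p2 q2 : ℝ)
    (X : Mat m n × Mat m n × Mat m n) : Mat m n × Mat m n × Mat m n :=
  ((Tmap K p1 q1 p2 q2 (X.1, X.2.1)).1, (Tmap K p1 q1 p2 q2 (X.1, X.2.1)).2, X.2.2)

/-- `T` acting on components 1 and 3 of a triple. -/
noncomputable def T13t {m n : ℕ} (K : Matrix (Fin n) (Fin m) ℝ) (p1 q1 p3 q3 : ℝ)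
    (X : Mat m n × Mat m n × Mat m n) : Mat m n × Mat m n × Mat m n :=
  ((Tmap K p1 q1 p3 q3 (X.1, X.2.2)).1, X.2.1, (Tmap K p1 q1 p3 q3 (X.1, X.2.2)).2)

/-- `T` acting on components 2 and 3 of a triple. -/
noncomputable def T23t {m n : ℕ} (K : Matrix (Fin n) (Fin m) ℝ) (p2 q2 p3 q3 : ℝ)
    (X : Mat m n × Mat m n × Mat m n) : Mat m n × Mat m n × Mat m n :=
  (X.1, Tmap K p2 q2 p3 q3 (X.2.1, X.2.2))

/-- `T⁻¹` acting on components 2 and 3 of a triple. -/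
noncomputable def Tinv23t {m n : ℕ} (K : Matrix (Fin n) (Fin m) ℝ) (p2 q2 p3 q3 : ℝ)
    (X : Mat m n × Mat m n × Mat m n) : Mat m n × Mat m n × Mat m n :=
  (X.1, Tinvmap K p2 q2 p3 q3 (X.2.1, X.2.2))

/-- `R⁻¹` acting on components 2 and 3 of a triple. -/
noncomputable def Rinv23t {m n : ℕ} (K : Matrix (Fin n) (Fin m) ℝ) (p2 q2 p3 q3 : ℝ)
    (X : Mat m n × Mat m n × Mat m n) : Mat m n × Mat m n × Mat m n :=
  (X.1, Rinvmap K p2 q2 p3 q3 (X.2.1, X.2.2))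


/-- Working form of being a rank-one `K`-projection. -/
def YBGood {m n : ℕ} (K : Matrix (Fin n) (Fin m) ℝ) (X : Mat m n) : Prop :=
  (X * K).trace = 1 ∧ ∀ M : Matrix (Fin n) (Fin m) ℝ, X * M * X = (X * M).trace • X

theorem yb_exists_vecMulVec {m n : ℕ} (X : Mat m n) (h : X.rank = 1) :
    ∃ u v, X = vecMulVec u v := by
  unfold Matrix.rank at h
  obtain ⟨⟨u, hu⟩, -, hs⟩ := finrank_eq_one_iff'.mp h
  have hv : ∀ j, ∃ c : ℝ, c • u = X.col j := by
    intro j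
    obtain ⟨c, hc⟩ := hs ⟨X.col j, ⟨Pi.single j 1, by simp⟩⟩
    exact ⟨c, congrArg Subtype.val hc⟩
  choose v hv using hv
  refine ⟨u, v, ?_⟩
  ext i j
  have := congrFun (hv j) i
  simp [Matrix.col] at this
  rw [vecMulVec_apply, ← this, mul_comm]

theorem yb_good_of_inS {m n : ℕ} {K : Matrix (Fin n) (Fin m) ℝ} {X : Mat m n} (h : InS K X) :
    YBGood K X := by
  obtain ⟨h1, h2⟩ := h
  obtain ⟨u, v, rfl⟩ := yb_exists_vecMulVec X h2
  have key : ∀ M : Matrix (Fin n) (Fin m) ℝ,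
      vecMulVec u v * M * vecMulVec u v = (vecMulVec u v * M).trace • vecMulVec u v := by
    intro M
    rw [vecMulVec_mul, vecMulVec_mul_vecMulVec, trace_vecMulVec, vecMulVec_smul, dotProduct_comm]
  refine ⟨?_, key⟩
  have h0 : vecMulVec u v ≠ 0 := by
    intro h0
    rw [h0] at h2
    simp at h2
  rw [key K] at h1
  have : ((vecMulVec u v * K).trace - 1) • vecMulVec u v = 0 := by
    rw [sub_smul, h1, one_smul, sub_self]
  rcases smul_eq_zero.mp this with h | h
  · linarith
  · exact absurd h h0

theorem yb_good_sandwich {m n : ℕ} {K : Matrix (Fin n) (Fin m) ℝ} {X : Mat m n}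
    (h : YBGood K X) (U : Matrix (Fin m) (Fin m) ℝ) (V : Matrix (Fin n) (Fin n) ℝ) (c : ℝ)
    (hc : (U * X * V * K).trace = c) (hc0 : c ≠ 0) : YBGood K (c⁻¹ • (U * X * V)) := by
  refine ⟨?_, fun M => ?_⟩
  · rw [smul_mul, trace_smul, hc, smul_eq_mul, inv_mul_cancel₀ hc0]
  · have e : U * X * V * M * (U * X * V) = U * (X * (V * M * U) * X) * V := by
      simp only [Matrix.mul_assoc]
    have t : (U * X * V * M).trace = (X * (V * M * U)).trace := by
      rw [show U * X * V * M = U * (X * V * M) by simp only [Matrix.mul_assoc], trace_mul_comm]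
      simp only [Matrix.mul_assoc]
    simp only [Matrix.smul_mul, Matrix.mul_smul, trace_smul, e, h.2, t, smul_eq_mul, smul_smul]
    congr 1
    ring

theorem yb_trace {m n : ℕ} {K : Matrix (Fin n) (Fin m) ℝ} {X Y : Mat m n}
    (hX : YBGood K X) (hY : YBGood K Y) (a b : ℝ) :
    ((1 - a • (Y * K)) * X * (1 - b • (K * Y)) * K).trace
      = 1 - (a + b - a * b) * (K * X * K * Y).trace := by
  have e : (1 - a • (Y * K)) * X * (1 - b • (K * Y)) * K
      = X * K - a • (Y * (K * X * K)) - b • (X * K * Y * K)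
        + (a * b) • ((Y * (K * X * K) * Y) * K) := by
    simp only [Matrix.sub_mul, Matrix.mul_sub, Matrix.smul_mul, Matrix.mul_smul, Matrix.one_mul, Matrix.mul_one,
      Matrix.mul_assoc]
    module
  have t1 : (Y * (K * X * K)).trace = (K * X * K * Y).trace := trace_mul_comm _ _
  have t2 : (X * K * Y * K).trace = (K * X * K * Y).trace := by
    rw [trace_mul_comm]; simp only [Matrix.mul_assoc]
  rw [e, hY.2]
  simp only [trace_add, trace_sub, trace_smul, smul_mul, t1, t2, hX.1, hY.1, smul_eq_mul]
  ring

theorem yb_trace1 {m n : ℕ} {K : Matrix (Fin n) (Fin m) ℝ} {X Y : Mat m n}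
    (hX : YBGood K X) (hY : YBGood K Y) (p1 q1 p2 q2 : ℝ) (hp : p1 ≠ p2) (hq : q1 ≠ q2) :
    ((1 - ((p2 - q2) / (p2 - p1)) • (Y * K)) * X *
        (1 - ((p2 - q2) / (q1 - q2)) • (K * Y)) * K).trace = adenom K p1 q1 p2 q2 X Y := by
  rw [yb_trace hX hY, adenom]
  have h1 : p2 - p1 ≠ 0 := sub_ne_zero.mpr hp.symm
  have h2 : q1 - q2 ≠ 0 := sub_ne_zero.mpr hq
  have h3 : q2 - q1 ≠ 0 := sub_ne_zero.mpr hq.symm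
  congr 2
  field_simp
  ring

theorem yb_trace2 {m n : ℕ} {K : Matrix (Fin n) (Fin m) ℝ} {X Y : Mat m n}
    (hX : YBGood K X) (hY : YBGood K Y) (p1 q1 p2 q2 : ℝ) (hp : p1 ≠ p2) (hq : q1 ≠ q2) :
    ((1 - ((p1 - q1) / (q2 - q1)) • (X * K)) * Y *
        (1 - ((p1 - q1) / (p1 - p2)) • (K * X)) * K).trace = adenom K p1 q1 p2 q2 X Y := by
  rw [yb_trace hY hX, adenom]
  have h1 : p2 - p1 ≠ 0 := sub_ne_zero.mpr hp.symm
  have h2 : p1 - p2 ≠ 0 := sub_ne_zero.mpr hp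
  have h3 : q2 - q1 ≠ 0 := sub_ne_zero.mpr hq.symm
  have t : (K * Y * K * X).trace = (K * X * K * Y).trace := by
    rw [show K * Y * K * X = (K * Y) * (K * X) by simp only [Matrix.mul_assoc], trace_mul_comm]
    simp only [Matrix.mul_assoc]
  rw [t]
  congr 2
  field_simp
  ring

theorem yb_good_R1 {m n : ℕ} {K : Matrix (Fin n) (Fin m) ℝ} {X Y : Mat m n}
    (hX : YBGood K X) (hY : YBGood K Y) {p1 q1 p2 q2 : ℝ} (hp : p1 ≠ p2) (hq : q1 ≠ q2)
    (h : adenom K p1 q1 p2 q2 X Y ≠ 0) : YBGood K (Rmap K p1 q1 p2 q2 (X, Y)).1 :=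
  yb_good_sandwich hX _ _ _ (yb_trace1 hX hY p1 q1 p2 q2 hp hq) h

theorem yb_good_R2 {m n : ℕ} {K : Matrix (Fin n) (Fin m) ℝ} {X Y : Mat m n}
    (hX : YBGood K X) (hY : YBGood K Y) {p1 q1 p2 q2 : ℝ} (hp : p1 ≠ p2) (hq : q1 ≠ q2)
    (h : adenom K p1 q1 p2 q2 X Y ≠ 0) : YBGood K (Rmap K p1 q1 p2 q2 (X, Y)).2 :=
  yb_good_sandwich hY _ _ _ (yb_trace2 hX hY p1 q1 p2 q2 hp hq) h

theorem yb_aux_neg (p q l : ℝ) : (p - q) / (l - q) = (q - p) / (q - l) := by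
  rw [← neg_sub q p, ← neg_sub q l, neg_div_neg_eq]

theorem yb_Tden1 {m n : ℕ} {K : Matrix (Fin n) (Fin m) ℝ} {X Y : Mat m n}
    (hX : YBGood K X) (hY : YBGood K Y) {p1 q1 p2 q2 : ℝ} (hp : p1 ≠ q2) (hq : q1 ≠ p2) :
    Tden1 K p1 q1 p2 q2 X Y = adenom K p1 q1 q2 p2 X Y := by
  rw [← yb_trace1 hX hY p1 q1 q2 p2 hp hq, Tden1, Amat, Btil, yb_aux_neg p2 q2 p1,
    ← neg_sub q2 p2, neg_div, neg_smul, ← sub_eq_add_neg]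

theorem yb_Tden2 {m n : ℕ} {K : Matrix (Fin n) (Fin m) ℝ} {X Y : Mat m n}
    (hX : YBGood K X) (hY : YBGood K Y) {p1 q1 p2 q2 : ℝ} (hp : p1 ≠ q2) (hq : q1 ≠ p2) :
    Tden2 K p1 q1 p2 q2 X Y = adenom K p1 q1 q2 p2 X Y := by
  rw [← yb_trace2 hX hY p1 q1 q2 p2 hp hq, Tden2, Amat, Btil, ← neg_sub p1 q2, div_neg, neg_smul,
    ← sub_eq_add_neg]

theorem yb_T {m n : ℕ} {K : Matrix (Fin n) (Fin m) ℝ} {X Y : Mat m n}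
    (hX : YBGood K X) (hY : YBGood K Y) {p1 q1 p2 q2 : ℝ} (hp : p1 ≠ q2) (hq : q1 ≠ p2) :
    Tmap K p1 q1 p2 q2 (X, Y) = Rmap K p1 q1 q2 p2 (X, Y) := by
  rw [Tmap, Rmap]
  dsimp only
  rw [yb_Tden1 hX hY hp hq, yb_Tden2 hX hY hp hq, Amat, Btil, Amat, Btil]
  have e1 : (p2 - q2) / (q1 - p2) = -((q2 - p2) / (q1 - p2)) := by
    rw [← neg_sub q2 p2, neg_div]
  have e2 : (p1 - q1) / (q2 - p1) = -((p1 - q1) / (p1 - q2)) := by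
    rw [← neg_sub p1 q2, div_neg]
  rw [e1, e2, yb_aux_neg p2 q2 p1, neg_smul, neg_smul, ← sub_eq_add_neg, ← sub_eq_add_neg]

theorem yb_Tinvden1 {m n : ℕ} {K : Matrix (Fin n) (Fin m) ℝ} {X Y : Mat m n}
    (hX : YBGood K X) (hY : YBGood K Y) {p1 q1 p2 q2 : ℝ} (hp : q1 ≠ p2) (hq : p1 ≠ q2) :
    Tinvden1 K p1 q1 p2 q2 X Y = adenom K q1 p1 p2 q2 X Y := by
  rw [← yb_trace1 hX hY q1 p1 p2 q2 hp hq, Tinvden1, Bmat, Atil, ← neg_sub p2 q1, div_neg,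
    neg_smul, ← sub_eq_add_neg]

theorem yb_Tinvden2 {m n : ℕ} {K : Matrix (Fin n) (Fin m) ℝ} {X Y : Mat m n}
    (hX : YBGood K X) (hY : YBGood K Y) {p1 q1 p2 q2 : ℝ} (hp : q1 ≠ p2) (hq : p1 ≠ q2) :
    Tinvden2 K p1 q1 p2 q2 X Y = adenom K q1 p1 p2 q2 X Y := by
  rw [← yb_trace2 hX hY q1 p1 p2 q2 hp hq, Tinvden2, Bmat, Atil, yb_aux_neg p1 q1 p2,
    ← neg_sub q1 p1, neg_div, neg_smul, ← sub_eq_add_neg]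

theorem yb_Tinv {m n : ℕ} {K : Matrix (Fin n) (Fin m) ℝ} {X Y : Mat m n}
    (hX : YBGood K X) (hY : YBGood K Y) {p1 q1 p2 q2 : ℝ} (hp : q1 ≠ p2) (hq : p1 ≠ q2) :
    Tinvmap K p1 q1 p2 q2 (X, Y) = Rmap K q1 p1 p2 q2 (X, Y) := by
  rw [Tinvmap, Rmap]
  dsimp only
  rw [yb_Tinvden1 hX hY hp hq, yb_Tinvden2 hX hY hp hq, Bmat, Atil, Bmat, Atil]
  have e1 : (p2 - q2) / (q1 - p2) = -((p2 - q2) / (p2 - q1)) := by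
    rw [← neg_sub p2 q1, div_neg]
  have e2 : (p1 - q1) / (q2 - p1) = -((q1 - p1) / (q2 - p1)) := by
    rw [← neg_sub q1 p1, neg_div]
  rw [e1, e2, yb_aux_neg p1 q1 p2, neg_smul, neg_smul, ← sub_eq_add_neg, ← sub_eq_add_neg]

section ring
variable {A : Type*} [Ring A] [Algebra ℝ A]

/-- The polynomial Lax matrix. -/
def ybF (p q : ℝ) (P : A) (l : ℝ) : A := (l - q) • (1 : A) - (p - q) • P

theorem ybF_inv (p q : ℝ) (P : A) (hP : P * P = P) (l : ℝ) :
    ((l - p) • (1 : A) + (p - q) • P) * ybF p q P l = ((l - p) * (l - q)) • (1 : A) := by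
  simp only [ybF, mul_sub, add_mul, smul_mul_smul, hP, one_mul, mul_one]
  module

theorem ybF_cancel {p q : ℝ} {P : A} (hP : P * P = P) {l : ℝ} (h1 : l ≠ p) (h2 : l ≠ q)
    {Z : A} (h : ybF p q P l * Z = 0) : Z = 0 := by
  have e := ybF_inv p q P hP l
  have : ((l - p) * (l - q)) • Z = 0 := by
    rw [← one_mul Z, ← smul_mul_assoc, ← e, mul_assoc, h, mul_zero]
  exact (smul_eq_zero.mp this).resolve_left
    (mul_ne_zero (sub_ne_zero.mpr h1) (sub_ne_zero.mpr h2))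

theorem ybF_inv' (p q : ℝ) (P : A) (hP : P * P = P) (l : ℝ) :
    ybF p q P l * ((l - p) • (1 : A) + (p - q) • P) = ((l - p) * (l - q)) • (1 : A) := by
  simp only [ybF, sub_mul, mul_add, smul_mul_smul, hP, one_mul, mul_one]
  module

theorem ybF_cancel' {p q : ℝ} {P : A} (hP : P * P = P) {l : ℝ} (h1 : l ≠ p) (h2 : l ≠ q)
    {Z W : A} (h : Z * ybF p q P l = W * ybF p q P l) : Z = W := by
  have e := ybF_inv' p q P hP l
  have : ((l - p) * (l - q)) • (Z - W) = 0 := by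
    rw [← mul_one (Z - W), ← mul_smul_comm, ← e, ← mul_assoc, sub_mul, h, sub_self, zero_mul]
  exact sub_eq_zero.mp ((smul_eq_zero.mp this).resolve_left
    (mul_ne_zero (sub_ne_zero.mpr h1) (sub_ne_zero.mpr h2)))

/-- The right-most factor is determined by the product. -/
theorem yb_rightmost {p q : ℝ} (hpq : p ≠ q) {P P' : A} (hP : P * P = P) (hP' : P' * P' = P')
    (M M' N N' : A)
    (hM' : ∀ Z, M' * Z = 0 → Z = 0) (hN' : ∀ Z, N' * Z = 0 → Z = 0)
    (h1 : M * ybF p q P p = M' * ybF p q P' p)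
    (h2 : N * ybF p q P q = N' * ybF p q P' q) : P = P' := by
  have hd : p - q ≠ 0 := sub_ne_zero.mpr hpq
  have a1 : M * (1 - P) = M' * (1 - P') := by
    have : (p - q) • (M * (1 - P)) = (p - q) • (M' * (1 - P')) := by
      rw [← mul_smul_comm, ← mul_smul_comm, smul_sub, smul_sub]; exact h1
    exact smul_right_injective A hd this
  have a2 : N * P = N' * P' := by
    have : (p - q) • (N * P) = (p - q) • (N' * P') := by
      simp only [ybF, sub_self, zero_smul, zero_sub, mul_neg, mul_smul_comm, neg_inj] at h2
      exact h2
    exact smul_right_injective A hd this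
  have b1 : (1 - P') * P = 0 := by
    apply hM'
    rw [← mul_assoc, ← a1, mul_assoc, sub_mul, one_mul, hP, sub_self, mul_zero]
  have b2 : P' * (1 - P) = 0 := by
    apply hN'
    rw [← mul_assoc, ← a2, mul_assoc, mul_sub, mul_one, hP, sub_self, mul_zero]
  rw [sub_mul, one_mul, sub_eq_zero] at b1
  rw [mul_sub, mul_one, sub_eq_zero] at b2
  rw [b1, ← b2]

/-- Uniqueness of the ordered factorization of a product of three Lax matrices. -/
theorem yb_unique {p1 q1 p2 q2 p3 q3 : ℝ} (h11 : p1 ≠ q1) (h22 : p2 ≠ q2) (h33 : p3 ≠ q3)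
    (p12 : p1 ≠ p2) (p13 : p1 ≠ p3) (p23 : p2 ≠ p3) (q12 : q1 ≠ q2) (q13 : q1 ≠ q3)
    (q23 : q2 ≠ q3) (h12 : p1 ≠ q2) (h13 : p1 ≠ q3) (h21 : p2 ≠ q1) (h23 : p2 ≠ q3)
    (h31 : p3 ≠ q1) (h32 : p3 ≠ q2)
    {P1 P2 P3 P1' P2' P3' : A} (e1 : P1 * P1 = P1) (e2 : P2 * P2 = P2) (e3 : P3 * P3 = P3)
    (e1' : P1' * P1' = P1') (e2' : P2' * P2' = P2') (e3' : P3' * P3' = P3')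
    (H : ∀ l, ybF p3 q3 P3 l * ybF p2 q2 P2 l * ybF p1 q1 P1 l
      = ybF p3 q3 P3' l * ybF p2 q2 P2' l * ybF p1 q1 P1' l) :
    P1 = P1' ∧ P2 = P2' ∧ P3 = P3' := by
  have E1 : P1 = P1' := by
    refine yb_rightmost h11 e1 e1' _ _ _ _ ?_ ?_ (H p1) (H q1)
    · intro Z hZ
      rw [mul_assoc] at hZ
      exact ybF_cancel e2' p12 h12 (ybF_cancel e3' p13 h13 hZ)
    · intro Z hZ
      rw [mul_assoc] at hZ
      exact ybF_cancel e2' h21.symm q12 (ybF_cancel e3' h31.symm q13 hZ)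
  subst E1
  have H2 : ∀ l, l ≠ p1 → l ≠ q1 → ybF p3 q3 P3 l * ybF p2 q2 P2 l
      = ybF p3 q3 P3' l * ybF p2 q2 P2' l := fun l hl hl' => ybF_cancel' e1 hl hl' (H l)
  have E2 : P2 = P2' := by
    refine yb_rightmost h22 e2 e2' _ _ _ _ ?_ ?_ (H2 p2 p12.symm h21) (H2 q2 h12.symm q12.symm)
    · intro Z hZ
      exact ybF_cancel e3' p23 h23 hZ
    · intro Z hZ
      exact ybF_cancel e3' h32.symm q23 hZ
  subst E2
  refine ⟨rfl, rfl, ?_⟩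
  have H3 := ybF_cancel' e2 p23.symm h32 (H2 p3 p13.symm h31)
  simp only [ybF] at H3
  have := smul_right_injective A (sub_ne_zero.mpr h33) (sub_right_injective H3)
  exact this

theorem yb_expand {P1 P2 : A} {t : ℝ} (x21 : P2 * (P1 * P2) = t • P2) (al a b : ℝ) :
    al • ((1 - a • P2) * P1 * (1 - b • P2))
      = al • P1 - (al * a) • (P2 * P1) - (al * b) • (P1 * P2) + (al * a * b * t) • P2 := by
  simp only [mul_sub, sub_mul, smul_mul_assoc, mul_smul_comm, mul_assoc, one_mul, mul_one, x21]
  module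

/-- Refactorization. -/
theorem yb_refactor {p1 q1 p2 q2 : ℝ} (hp : p1 ≠ p2) (hq : q1 ≠ q2) {P1 P2 : A} {t c : ℝ}
    (e1 : P1 * P1 = P1) (e2 : P2 * P2 = P2)
    (e12 : P1 * P2 * P1 = t • P1) (e21 : P2 * P1 * P2 = t • P2)
    (hc : c = 1 - (p1 - q1) * (p2 - q2) / ((p2 - p1) * (q2 - q1)) * t) (hc0 : c ≠ 0) (l : ℝ)
    {Q1 Q2 : A}
    (hQ1 : Q1 = c⁻¹ • ((1 - ((p2 - q2) / (p2 - p1)) • P2) * P1 *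
        (1 - ((p2 - q2) / (q1 - q2)) • P2)))
    (hQ2 : Q2 = c⁻¹ • ((1 - ((p1 - q1) / (q2 - q1)) • P1) * P2 *
        (1 - ((p1 - q1) / (p1 - p2)) • P1))) :
    ybF p1 q1 P1 l * ybF p2 q2 P2 l = ybF p2 q2 Q2 l * ybF p1 q1 Q1 l := by
  have x12 : P1 * (P2 * P1) = t • P1 := by rw [← mul_assoc, e12]
  have x21 : P2 * (P1 * P2) = t • P2 := by rw [← mul_assoc, e21]
  have y11 : ∀ Z, P1 * (P1 * Z) = P1 * Z := fun Z => by rw [← mul_assoc, e1]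
  have y22 : ∀ Z, P2 * (P2 * Z) = P2 * Z := fun Z => by rw [← mul_assoc, e2]
  have h1 : p2 - p1 ≠ 0 := sub_ne_zero.mpr hp.symm
  have h3 : q2 - q1 ≠ 0 := sub_ne_zero.mpr hq.symm
  have hD : (p2 - p1) * (q2 - q1) - (p1 - q1) * (p2 - q2) * t ≠ 0 := by
    intro h0
    apply hc0
    rw [hc]
    field_simp
    linear_combination h0
  have hal : c⁻¹ = (p2 - p1) * (q2 - q1) /
      ((p2 - p1) * (q2 - q1) - (p1 - q1) * (p2 - q2) * t) := by
    rw [hc]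
    field_simp
  rw [yb_expand x21] at hQ1
  rw [yb_expand x12] at hQ2
  have g2 : (p2 - q2) / (q1 - q2) = -((p2 - q2) / (q2 - q1)) := by
    rw [← neg_sub q2 q1, div_neg]
  have g4 : (p1 - q1) / (p1 - p2) = -((p1 - q1) / (p2 - p1)) := by
    rw [← neg_sub p2 p1, div_neg]
  rw [hal, g2] at hQ1
  rw [hal, g4] at hQ2
  generalize ha : (p2 - p1) * (q2 - q1) /
      ((p2 - p1) * (q2 - q1) - (p1 - q1) * (p2 - q2) * t) = al at hQ1 hQ2
  generalize hb : al * ((p2 - q2) / (p2 - p1)) = b at hQ1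
  generalize he : al * (-((p2 - q2) / (q2 - q1))) = e at hQ1
  generalize hf : b * (-((p2 - q2) / (q2 - q1))) * t = f at hQ1
  generalize hb2 : al * ((p1 - q1) / (q2 - q1)) = b2 at hQ2
  generalize he2 : al * (-((p1 - q1) / (p2 - p1))) = e2 at hQ2
  generalize hf2 : b2 * (-((p1 - q1) / (p2 - p1))) * t = f2 at hQ2
  have key : ∀ r1 r2 d1 d2 : ℝ, (r2 • (1 : A) - d2 • Q2) * (r1 • (1 : A) - d1 • Q1)
      = (r2 * r1) • (1 : A)
      + (- r2 * d1 * al - d2 * r1 * f2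
          + d2 * d1 * (f2 * al - b2 * al * t - f2 * b * t + b2 * b * t)) • P1
      + (- r2 * d1 * f - d2 * r1 * al
          + d2 * d1 * (al * f - al * e * t - e2 * f * t + e2 * e * t)) • P2
      + (r2 * d1 * e + d2 * r1 * b2
          + d2 * d1 * (-f2 * e + f2 * f + b2 * e * t - b2 * f)) • (P1 * P2)
      + (r2 * d1 * b + d2 * r1 * e2
          + d2 * d1 * (al * al - al * b - e2 * al + e2 * b * t)) • (P2 * P1) := by
    intro r1 r2 d1 d2
    subst hQ1 hQ2
    simp only [mul_sub, sub_mul, mul_add, add_mul, smul_mul_assoc, mul_smul_comm, mul_assoc,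
      one_mul, mul_one, smul_sub, smul_add, ‹P1 * P1 = P1›, ‹P2 * P2 = P2›, x12, x21, y11, y22]
    match_scalars
    all_goals try ring
  simp only [ybF]
  rw [key]
  simp only [mul_sub, sub_mul, smul_mul_assoc, mul_smul_comm, one_mul, mul_one]
  subst hf hf2 hb he hb2 he2 ha
  clear key hQ1 hQ2 e1 e2 e12 e21 x12 x21 y11 y22 g2 g4 hal hc hc0
  have hD' : (p2 - p1) * (q2 - q1) - (p2 - q2) * (p1 - q1) * t ≠ 0 := by
    rwa [mul_comm (p2 - q2)]
  match_scalars
  all_goals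
    try field_simp
    try ring1

end ring

theorem YBGood.proj {m n : ℕ} {K : Matrix (Fin n) (Fin m) ℝ} {X : Mat m n} (h : YBGood K X) :
    X * K * X = X := by
  rw [h.2, h.1, one_smul]

theorem YBGood.projL {m n : ℕ} {K : Matrix (Fin n) (Fin m) ℝ} {X : Mat m n} (h : YBGood K X) :
    X * K * (X * K) = X * K := by
  rw [← Matrix.mul_assoc, h.proj]

theorem YBGood.projR {m n : ℕ} {K : Matrix (Fin n) (Fin m) ℝ} {X : Mat m n} (h : YBGood K X) :
    K * X * (K * X) = K * X := by
  rw [Matrix.mul_assoc, ← Matrix.mul_assoc X, h.proj]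

theorem YBGood.sand {m n : ℕ} {K : Matrix (Fin n) (Fin m) ℝ} {X : Mat m n} (h : YBGood K X)
    (Y : Mat m n) : X * (K * (Y * (K * X))) = (K * X * K * Y).trace • X := by
  have := h.2 (K * Y * K)
  rw [trace_mul_comm X] at this
  have e : (K * Y * K * X).trace = (K * X * K * Y).trace := by
    rw [show K * Y * K * X = (K * Y) * (K * X) by simp only [Matrix.mul_assoc], trace_mul_comm]
    simp only [Matrix.mul_assoc]
  rw [e] at this
  rw [← this]
  simp only [Matrix.mul_assoc]

theorem YBGood.sand2 {m n : ℕ} {K : Matrix (Fin n) (Fin m) ℝ} {X : Mat m n} (h : YBGood K X)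
    (Y : Mat m n) : X * (K * (Y * (K * X))) = (K * Y * K * X).trace • X := by
  have := h.2 (K * Y * K)
  rw [trace_mul_comm X] at this
  rw [← this]
  simp only [Matrix.mul_assoc]

theorem yb_R_left {m n : ℕ} {K : Matrix (Fin n) (Fin m) ℝ} {X Y : Mat m n}
    (hX : YBGood K X) (hY : YBGood K Y) {p1 q1 p2 q2 : ℝ} (hp : p1 ≠ p2) (hq : q1 ≠ q2)
    (h : adenom K p1 q1 p2 q2 X Y ≠ 0) (l : ℝ) :
    ybF p1 q1 (X * K) l * ybF p2 q2 (Y * K) l =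
      ybF p2 q2 ((Rmap K p1 q1 p2 q2 (X, Y)).2 * K) l *
        ybF p1 q1 ((Rmap K p1 q1 p2 q2 (X, Y)).1 * K) l := by
  refine yb_refactor hp hq (t := (K * X * K * Y).trace) (c := adenom K p1 q1 p2 q2 X Y)
    hX.projL hY.projL ?_ ?_ rfl h l ?_ ?_
  · rw [← Matrix.smul_mul, ← hX.sand Y]; simp only [Matrix.mul_assoc]
  · rw [← Matrix.smul_mul, ← hY.sand2 X]; simp only [Matrix.mul_assoc]
  · simp only [Rmap, Matrix.mul_assoc, Matrix.smul_mul, Matrix.sub_mul, Matrix.mul_sub,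
      Matrix.mul_smul, Matrix.one_mul, Matrix.mul_one]
  · simp only [Rmap, Matrix.mul_assoc, Matrix.smul_mul, Matrix.sub_mul, Matrix.mul_sub,
      Matrix.mul_smul, Matrix.one_mul, Matrix.mul_one]

theorem yb_R_right {m n : ℕ} {K : Matrix (Fin n) (Fin m) ℝ} {X Y : Mat m n}
    (hX : YBGood K X) (hY : YBGood K Y) {p1 q1 p2 q2 : ℝ} (hp : p1 ≠ p2) (hq : q1 ≠ q2)
    (h : adenom K p1 q1 p2 q2 X Y ≠ 0) (l : ℝ) :
    ybF p1 q1 (K * X) l * ybF p2 q2 (K * Y) l =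
      ybF p2 q2 (K * (Rmap K p1 q1 p2 q2 (X, Y)).2) l *
        ybF p1 q1 (K * (Rmap K p1 q1 p2 q2 (X, Y)).1) l := by
  refine yb_refactor hp hq (t := (K * X * K * Y).trace) (c := adenom K p1 q1 p2 q2 X Y)
    hX.projR hY.projR ?_ ?_ rfl h l ?_ ?_
  · rw [← Matrix.mul_smul, ← hX.sand Y]; simp only [Matrix.mul_assoc]
  · rw [← Matrix.mul_smul, ← hY.sand2 X]; simp only [Matrix.mul_assoc]
  · simp only [Rmap, Matrix.mul_assoc, Matrix.smul_mul, Matrix.sub_mul, Matrix.mul_sub,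
      Matrix.mul_smul, Matrix.one_mul, Matrix.mul_one]
  · simp only [Rmap, Matrix.mul_assoc, Matrix.smul_mul, Matrix.sub_mul, Matrix.mul_sub,
      Matrix.mul_smul, Matrix.one_mul, Matrix.mul_one]

theorem yb_ext {m n : ℕ} {K : Matrix (Fin n) (Fin m) ℝ} {X Y : Mat m n}
    (hX : YBGood K X) (hY : YBGood K Y) (h1 : X * K = Y * K) (h2 : K * X = K * Y) : X = Y := by
  rw [← hX.proj, h1, Matrix.mul_assoc, h2, ← Matrix.mul_assoc, hY.proj]

theorem yb_chain {A : Type*} [Ring A] {f1 f2 f3 f2a f1a f3b f1b f3c f2c f2d f3d f3e f1e f2g f1g : A}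
    (s1 : f1 * f2 = f2a * f1a) (s2 : f1a * f3 = f3b * f1b) (s3 : f2a * f3b = f3c * f2c)
    (t1 : f2 * f3 = f3d * f2d) (t2 : f1 * f3d = f3e * f1e) (t3 : f1e * f2d = f2g * f1g) :
    f3c * f2c * f1b = f3e * f2g * f1g := by
  rw [← s3, mul_assoc, ← s2, ← mul_assoc, ← s1, mul_assoc, t1, ← mul_assoc, t2, mul_assoc, t3,
    mul_assoc]

/-- the mixed Yang–Baxter equation
`Tinv₂₃ ∘ R₁₃ ∘ T₁₂ = T₁₂ ∘ R₁₃ ∘ Tinv₂₃`. -/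
theorem mixed_YangBaxter_Tinv_R_T
    (m n : ℕ) (hm : 0 < m) (hn : 0 < n)
    (K : Matrix (Fin n) (Fin m) ℝ) (hK : K.rank = min n m)
    (p1 q1 p2 q2 p3 q3 : ℝ)
    (hp : List.Pairwise (· ≠ ·) [p1, p2, p3])
    (hq : List.Pairwise (· ≠ ·) [q1, q2, q3])
    (hpq11 : p1 ≠ q1) (hpq12 : p1 ≠ q2) (hpq13 : p1 ≠ q3)
    (hpq21 : p2 ≠ q1) (hpq22 : p2 ≠ q2) (hpq23 : p2 ≠ q3)
    (hpq31 : p3 ≠ q1) (hpq32 : p3 ≠ q2) (hpq33 : p3 ≠ q3)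
    (X1 X2 X3 : Mat m n) (hX1 : InS K X1) (hX2 : InS K X2) (hX3 : InS K X3)
    -- intermediate triples of the two compositions
    (U V U' V' : Mat m n × Mat m n × Mat m n)
    (hU : U = T12t K p1 q1 p2 q2 (X1, X2, X3))
    (hV : V = R13t K p1 q1 p3 q3 U)
    (hU' : U' = Tinv23t K p2 q2 p3 q3 (X1, X2, X3))
    (hV' : V' = R13t K p1 q1 p3 q3 U')
    -- every trace denominator and α-factor occurring is nonzero
    (hd1 : Tden1 K p1 q1 p2 q2 X1 X2 ≠ 0)
    (hd2 : Tden2 K p1 q1 p2 q2 X1 X2 ≠ 0)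
    (ha1 : adenom K p1 q1 p3 q3 U.1 U.2.2 ≠ 0)
    (hd3 : Tinvden1 K p2 q2 p3 q3 V.2.1 V.2.2 ≠ 0)
    (hd4 : Tinvden2 K p2 q2 p3 q3 V.2.1 V.2.2 ≠ 0)
    (hd5 : Tinvden1 K p2 q2 p3 q3 X2 X3 ≠ 0)
    (hd6 : Tinvden2 K p2 q2 p3 q3 X2 X3 ≠ 0)
    (ha2 : adenom K p1 q1 p3 q3 U'.1 U'.2.2 ≠ 0)
    (hd7 : Tden1 K p1 q1 p2 q2 V'.1 V'.2.1 ≠ 0)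
    (hd8 : Tden2 K p1 q1 p2 q2 V'.1 V'.2.1 ≠ 0) :
    Tinv23t K p2 q2 p3 q3 V = T12t K p1 q1 p2 q2 V' := by
  obtain ⟨⟨p12, p13⟩, p23⟩ : (p1 ≠ p2 ∧ p1 ≠ p3) ∧ p2 ≠ p3 := by simpa using hp
  obtain ⟨⟨q12, q13⟩, q23⟩ : (q1 ≠ q2 ∧ q1 ≠ q3) ∧ q2 ≠ q3 := by simpa using hq
  have g1 := yb_good_of_inS hX1
  have g2 := yb_good_of_inS hX2
  have g3 := yb_good_of_inS hX3
  -- first composition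
  have eT := yb_T g1 g2 hpq12 hpq21.symm
  rw [yb_Tden1 g1 g2 hpq12 hpq21.symm] at hd1
  have gA1 := yb_good_R1 g1 g2 hpq12 hpq21.symm hd1
  have gA2 := yb_good_R2 g1 g2 hpq12 hpq21.symm hd1
  have sL1 := yb_R_left g1 g2 hpq12 hpq21.symm hd1
  have sR1 := yb_R_right g1 g2 hpq12 hpq21.symm hd1
  simp only [T12t, eT] at hU
  generalize Rmap K p1 q1 q2 p2 (X1, X2) = WA at *
  obtain ⟨A1, A2⟩ := WA
  subst hU
  simp only [R13t] at hV
  dsimp only at *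
  have gB1 := yb_good_R1 gA1 g3 p13 q13 ha1
  have gB3 := yb_good_R2 gA1 g3 p13 q13 ha1
  have sL2 := yb_R_left gA1 g3 p13 q13 ha1
  have sR2 := yb_R_right gA1 g3 p13 q13 ha1
  generalize Rmap K p1 q1 p3 q3 (A1, X3) = WB at *
  obtain ⟨B1, B3⟩ := WB
  subst hV
  dsimp only at *
  rw [yb_Tinvden1 gA2 gB3 hpq32.symm hpq23] at hd3
  have eI := yb_Tinv gA2 gB3 hpq32.symm hpq23
  have gC2 := yb_good_R1 gA2 gB3 hpq32.symm hpq23 hd3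
  have gC3 := yb_good_R2 gA2 gB3 hpq32.symm hpq23 hd3
  have sL3 := yb_R_left gA2 gB3 hpq32.symm hpq23 hd3
  have sR3 := yb_R_right gA2 gB3 hpq32.symm hpq23 hd3
  simp only [Tinv23t, eI]
  generalize Rmap K q2 p2 p3 q3 (A2, B3) = WC at *
  obtain ⟨C2, C3⟩ := WC
  dsimp only at *
  -- second composition
  have eI' := yb_Tinv g2 g3 hpq32.symm hpq23
  rw [yb_Tinvden1 g2 g3 hpq32.symm hpq23] at hd5
  have gD2 := yb_good_R1 g2 g3 hpq32.symm hpq23 hd5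
  have gD3 := yb_good_R2 g2 g3 hpq32.symm hpq23 hd5
  have tL1 := yb_R_left g2 g3 hpq32.symm hpq23 hd5
  have tR1 := yb_R_right g2 g3 hpq32.symm hpq23 hd5
  simp only [Tinv23t, eI'] at hU'
  generalize Rmap K q2 p2 p3 q3 (X2, X3) = WD at *
  obtain ⟨D2, D3⟩ := WD
  subst hU'
  simp only [R13t] at hV'
  dsimp only at *
  have gE1 := yb_good_R1 g1 gD3 p13 q13 ha2
  have gE3 := yb_good_R2 g1 gD3 p13 q13 ha2
  have tL2 := yb_R_left g1 gD3 p13 q13 ha2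
  have tR2 := yb_R_right g1 gD3 p13 q13 ha2
  generalize Rmap K p1 q1 p3 q3 (X1, D3) = WE at *
  obtain ⟨E1, E3⟩ := WE
  subst hV'
  dsimp only at *
  rw [yb_Tden1 gE1 gD2 hpq12 hpq21.symm] at hd7
  have eT' := yb_T gE1 gD2 hpq12 hpq21.symm
  have gG1 := yb_good_R1 gE1 gD2 hpq12 hpq21.symm hd7
  have gG2 := yb_good_R2 gE1 gD2 hpq12 hpq21.symm hd7
  have tL3 := yb_R_left gE1 gD2 hpq12 hpq21.symm hd7
  have tR3 := yb_R_right gE1 gD2 hpq12 hpq21.symm hd7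
  simp only [T12t, eT']
  generalize Rmap K p1 q1 q2 p2 (E1, D2) = WG at *
  obtain ⟨G1, G2⟩ := WG
  dsimp only at *
  have HL := fun l => yb_chain (sL1 l) (sL2 l) (sL3 l) (tL1 l) (tL2 l) (tL3 l)
  have HR := fun l => yb_chain (sR1 l) (sR2 l) (sR3 l) (tR1 l) (tR2 l) (tR3 l)
  obtain ⟨l1, l2, l3⟩ := yb_unique hpq11 hpq22.symm hpq33 hpq12 p13 hpq32.symm hpq21.symm q13
    hpq23 p12 hpq13 q12.symm q23 hpq31 p23.symm
    gB1.projL gC2.projL gC3.projL gG1.projL gG2.projL gE3.projL HL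
  obtain ⟨r1, r2, r3⟩ := yb_unique hpq11 hpq22.symm hpq33 hpq12 p13 hpq32.symm hpq21.symm q13
    hpq23 p12 hpq13 q12.symm q23 hpq31 p23.symm
    gB1.projR gC2.projR gC3.projR gG1.projR gG2.projR gE3.projR HR
  rw [yb_ext gB1 gG1 l1 r1, yb_ext gC2 gG2 l2 r2, yb_ext gC3 gE3 l3 r3]
end

section
/- Let p1, p2, p3, q1, q2, q3 be reals with p1, p2, p3 pairwise distinct, q1, q2, q3 pairwise distinct, and p_i ≠ q_j for all i, j, and let X1, X2, X3 ∈ S. Assume all trace denominators and α-factors occurring in the compositions below are nonzero. Then T_{23}(2,3) ∘ T_{13}(1,3) ∘ R_{12}(1,2) = R_{12}(1,2) ∘ T_{13}(1,3) ∘ T_{23}(2,3) as maps on the triple (X1,X2,X3), where the subscripts indicate on which two components of the triple the maps R(p_i,q_i;p_j,q_j) and T(p_i,q_i;p_j,q_j) act. -/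
open Matrix

/-! ### Auxiliary lemmas -/

/-- normalized rank-one matrices, in a coordinate-free form -/
def Good {m n : ℕ} (K : Matrix (Fin n) (Fin m) ℝ) (X : Mat m n) : Prop :=
  (∀ M : Matrix (Fin n) (Fin m) ℝ, X * M * X = (M * X).trace • X) ∧ (X * K).trace = 1

theorem Good.idem {m n : ℕ} {K : Matrix (Fin n) (Fin m) ℝ} {X : Mat m n} (h : Good K X) :
    X * K * X = X := by
  rw [h.1 K, Matrix.trace_mul_comm, h.2, one_smul]

theorem Good.ne_zero {m n : ℕ} {K : Matrix (Fin n) (Fin m) ℝ} {X : Mat m n} (h : Good K X) :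
    X ≠ 0 := by
  rintro rfl
  have := h.2
  simp at this

theorem InS.good {m n : ℕ} {K : Matrix (Fin n) (Fin m) ℝ} {X : Mat m n} (h : InS K X) :
    Good K X := by
  obtain ⟨h1, h2⟩ := h
  have hne : X ≠ 0 := by
    rintro rfl
    simp at h2
  have key : ∀ M : Matrix (Fin n) (Fin m) ℝ, X * M * X = (M * X).trace • X := by
    intro M
    unfold Matrix.rank at h2
    obtain ⟨v, -, hv⟩ := finrank_eq_one_iff'.1 h2
    have hcol : ∀ j, ∃ c : ℝ, ∀ i, X i j = v.1 i * c := by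
      intro j
      obtain ⟨c, hc⟩ := hv ⟨X.mulVecLin (Pi.single j 1), LinearMap.mem_range_self _ _⟩
      refine ⟨c, fun i => ?_⟩
      have := congrFun (congrArg Subtype.val hc) i
      simp at this
      rw [← this, mul_comm]
    choose c hc using hcol
    have hX : X = vecMulVec v.1 c := by
      ext i j
      rw [hc, vecMulVec_apply]
    rw [hX]
    ext i j
    simp only [Matrix.mul_apply, Matrix.trace, Matrix.diag, vecMulVec_apply, Matrix.smul_apply,
      smul_eq_mul, Finset.sum_mul]
    rw [Finset.sum_comm]
    refine Finset.sum_congr rfl fun x _ => Finset.sum_congr rfl fun y _ => ?_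
    ring
  refine ⟨key, ?_⟩
  have h3 := key K
  rw [h1] at h3
  have h4 : ((K * X).trace - 1) • X = 0 := by
    rw [sub_smul, one_smul, ← h3, sub_self]
  rcases smul_eq_zero.1 h4 with h5 | h5
  · rw [Matrix.trace_mul_comm]; linarith
  · exact absurd h5 hne

theorem good_norm {m n : ℕ} {K : Matrix (Fin n) (Fin m) ℝ} {X : Mat m n} (h : Good K X)
    (L : Matrix (Fin m) (Fin m) ℝ) (R : Matrix (Fin n) (Fin n) ℝ) (s : ℝ)
    (hs : s = (L * X * R * K).trace) (h0 : s ≠ 0) : Good K (s⁻¹ • (L * X * R)) := by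
  constructor
  · intro M
    have h1 := h.1 (R * M * L)
    have h2 : L * X * R * M * (L * X * R) = (M * (L * X * R)).trace • (L * X * R) := by
      have e1 : L * X * R * M * (L * X * R) = L * (X * (R * M * L) * X) * R := by
        simp only [Matrix.mul_assoc]
      have e2 : (M * (L * X * R)).trace = (R * M * L * X).trace := by
        rw [← Matrix.mul_assoc, Matrix.trace_mul_comm]
        simp only [Matrix.mul_assoc]
      rw [e1, h1, e2]
      simp
    simp only [Matrix.smul_mul, Matrix.mul_smul, h2, Matrix.trace_smul, smul_smul, smul_eq_mul]
    congr 1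
    ring
  · rw [Matrix.smul_mul, Matrix.trace_smul, ← hs, smul_eq_mul, inv_mul_cancel₀ h0]

theorem good_eq {m n : ℕ} {K : Matrix (Fin n) (Fin m) ℝ} {X Y Z : Mat m n} (hX : Good K X)
    (hY : Good K Y) (h1 : ∃ a : ℝ, X = a • Z) (h2 : ∃ a : ℝ, Y = a • Z) : X = Y := by
  obtain ⟨a, rfl⟩ := h1
  obtain ⟨b, rfl⟩ := h2
  have ha := hX.2
  have hb := hY.2
  rw [Matrix.smul_mul, Matrix.trace_smul, smul_eq_mul] at ha hb
  have hz : (Z * K).trace ≠ 0 := by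
    intro h
    rw [h, mul_zero] at ha
    exact zero_ne_one ha
  rw [mul_right_cancel₀ hz (ha.trans hb.symm)]

/-- quadratic relations in the algebra generated by two good matrices -/
theorem good_trip {m n : ℕ} {K : Matrix (Fin n) (Fin m) ℝ} {X Y : Mat m n} (hX : Good K X) :
    X * K * Y * K * X = (K * Y * K * X).trace • X := by
  rw [← hX.1]
  simp only [Matrix.mul_assoc]

theorem tr_cyc {m n : ℕ} (K : Matrix (Fin n) (Fin m) ℝ) (X Y : Mat m n) :
    (K * Y * K * X).trace = (K * X * K * Y).trace := by
  rw [Matrix.mul_assoc (K * Y), Matrix.trace_mul_comm]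
  simp only [Matrix.mul_assoc]

/-- expansion of a two-sided dressing -/
theorem dress_expand {m n : ℕ} {K : Matrix (Fin n) (Fin m) ℝ} {X Y : Mat m n} (hY : Good K Y)
    (c d : ℝ) :
    (1 - c • (Y * K)) * X * (1 + d • (K * Y)) =
      X - c • (Y * K * X) + d • (X * K * Y) - (c * d * (K * X * K * Y).trace) • Y := by
  have h := good_trip (Y := X) hY
  simp only [Matrix.sub_mul, Matrix.mul_add, Matrix.one_mul, Matrix.mul_one, Matrix.smul_mul,
    Matrix.mul_smul, ← Matrix.mul_assoc, h, smul_smul]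
  module

theorem dress_trace {m n : ℕ} {K : Matrix (Fin n) (Fin m) ℝ} {X Y : Mat m n} (hX : Good K X)
    (hY : Good K Y) (c d : ℝ) :
    ((1 - c • (Y * K)) * X * (1 + d • (K * Y)) * K).trace =
      1 + (-c + d - c * d) * (K * X * K * Y).trace := by
  rw [dress_expand hY]
  have e1 : (Y * K * X * K).trace = (K * X * K * Y).trace := by
    rw [Matrix.trace_mul_comm, ← Matrix.mul_assoc, ← Matrix.mul_assoc, tr_cyc]
  have e2 : (X * K * Y * K).trace = (K * X * K * Y).trace := by
    rw [Matrix.trace_mul_comm, ← Matrix.mul_assoc, ← Matrix.mul_assoc]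
  simp only [Matrix.add_mul, Matrix.sub_mul, Matrix.smul_mul, Matrix.trace_add, Matrix.trace_sub,
    Matrix.trace_smul, e1, e2, hX.2, hY.2, smul_eq_mul]
  ring

/-- general form of the Lax identity from the half form -/
theorem lax_A {m n : ℕ} {K : Matrix (Fin n) (Fin m) ℝ} {X Y Z W : Mat m n} {a b : ℝ}
    (h : a • X + b • Y - (a * b) • (X * K * Y) = b • Z + a • W - (a * b) • (Z * K * W)) :
    (1 - a • (X * K)) * (1 - b • (Y * K)) = (1 - b • (Z * K)) * (1 - a • (W * K)) := by
  have h' := congrArg (fun M => M * K) h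
  simp only [Matrix.add_mul, Matrix.sub_mul, Matrix.smul_mul] at h'
  simp only [Matrix.sub_mul, Matrix.mul_sub, Matrix.one_mul, Matrix.mul_one, Matrix.smul_mul,
    Matrix.mul_smul, ← Matrix.mul_assoc]
  linear_combination (norm := module) (-1 : ℝ) • h'

theorem lax_At {m n : ℕ} {K : Matrix (Fin n) (Fin m) ℝ} {X Y Z W : Mat m n} {a b : ℝ}
    (h : a • X + b • Y - (a * b) • (X * K * Y) = b • Z + a • W - (a * b) • (Z * K * W)) :
    (1 - a • (K * X)) * (1 - b • (K * Y)) = (1 - b • (K * Z)) * (1 - a • (K * W)) := by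
  have h' := congrArg (fun M => K * M) h
  simp only [Matrix.mul_add, Matrix.mul_sub, Matrix.mul_smul, ← Matrix.mul_assoc] at h'
  simp only [Matrix.sub_mul, Matrix.mul_sub, Matrix.one_mul, Matrix.mul_one, Matrix.smul_mul,
    Matrix.mul_smul, ← Matrix.mul_assoc]
  linear_combination (norm := module) (-1 : ℝ) • h'

section inverses
variable {m n : ℕ} {K : Matrix (Fin n) (Fin m) ℝ} {X : Mat m n} {p q l : ℝ}

theorem A_mul_B (h : Good K X) (hp : l ≠ p) (hq : l ≠ q) :
    Amat K p q l X * Bmat K p q l X = 1 := by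
  have hp' := sub_ne_zero.2 hp
  have hq' := sub_ne_zero.2 hq
  simp only [Amat, Bmat, Matrix.sub_mul, Matrix.mul_add, Matrix.one_mul, Matrix.mul_one,
    Matrix.smul_mul, Matrix.mul_smul, ← Matrix.mul_assoc, h.idem]
  match_scalars
  · norm_num
  · field_simp
    ring

theorem At_mul_Bt (h : Good K X) (hp : l ≠ p) (hq : l ≠ q) :
    Atil K p q l X * Btil K p q l X = 1 := by
  have hp' := sub_ne_zero.2 hp
  have hq' := sub_ne_zero.2 hq
  have e : K * X * K * X = K * X := by
    rw [Matrix.mul_assoc K, Matrix.mul_assoc K, h.idem]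
  simp only [Atil, Btil, Matrix.sub_mul, Matrix.mul_add, Matrix.one_mul, Matrix.mul_one,
    Matrix.smul_mul, Matrix.mul_smul, ← Matrix.mul_assoc, e]
  match_scalars
  · norm_num
  · field_simp
    ring

theorem B_mul_A (h : Good K X) (hp : l ≠ p) (hq : l ≠ q) :
    Bmat K p q l X * Amat K p q l X = 1 :=
  mul_eq_one_comm.1 (A_mul_B h hp hq)

theorem Bt_mul_At (h : Good K X) (hp : l ≠ p) (hq : l ≠ q) :
    Btil K p q l X * Atil K p q l X = 1 :=
  mul_eq_one_comm.1 (At_mul_Bt h hp hq)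

end inverses

/-- Lax identity of `T`, half form -/
theorem T_half {m n : ℕ} {K : Matrix (Fin n) (Fin m) ℝ} {X1 X2 : Mat m n} {p1 q1 p2 q2 l : ℝ}
    (h1 : Good K X1) (h2 : Good K X2) (h12 : p1 ≠ q2) (h21 : p2 ≠ q1)
    (hl1 : l ≠ q1) (hl2 : l ≠ q2)
    (hd1 : Tden1 K p1 q1 p2 q2 X1 X2 ≠ 0) (hd2 : Tden2 K p1 q1 p2 q2 X1 X2 ≠ 0) :
    ((p1 - q1) / (l - q1)) • (Tmap K p1 q1 p2 q2 (X1, X2)).1 + ((p2 - q2) / (l - q2)) • X2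
      - ((p1 - q1) / (l - q1) * ((p2 - q2) / (l - q2))) •
        ((Tmap K p1 q1 p2 q2 (X1, X2)).1 * K * X2) =
    ((p2 - q2) / (l - q2)) • (Tmap K p1 q1 p2 q2 (X1, X2)).2 + ((p1 - q1) / (l - q1)) • X1
      - ((p1 - q1) / (l - q1) * ((p2 - q2) / (l - q2))) •
        ((Tmap K p1 q1 p2 q2 (X1, X2)).2 * K * X1) := by
  have a1 : p1 - q2 ≠ 0 := sub_ne_zero.2 h12
  have a2 : q1 - p2 ≠ 0 := sub_ne_zero.2 h21.symm
  have a3 : p2 - q1 ≠ 0 := sub_ne_zero.2 h21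
  have a4 : q2 - p1 ≠ 0 := sub_ne_zero.2 h12.symm
  have a5 : l - q1 ≠ 0 := sub_ne_zero.2 hl1
  have a6 : l - q2 ≠ 0 := sub_ne_zero.2 hl2
  have t1 := good_trip (Y := X2) h1
  have t2 := good_trip (Y := X1) h2
  have t3 : X1 * K * X2 * K * X2 = X1 * K * X2 := by
    rw [Matrix.mul_assoc _ K X2, Matrix.mul_assoc _ X2, ← Matrix.mul_assoc X2, h2.idem]
  have t4 : X2 * K * X1 * K * X1 = X2 * K * X1 := by
    rw [Matrix.mul_assoc _ K X1, Matrix.mul_assoc _ X1, ← Matrix.mul_assoc X1, h1.idem]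
  simp only [Tmap, Tden1, Tden2, Amat, Btil] at *
  rw [dress_trace h1 h2] at *
  rw [dress_trace h2 h1] at *
  rw [dress_expand h1, dress_expand h2]
  rw [tr_cyc K X1 X2] at *
  generalize hg : (K * X1 * K * X2).trace = g at *
  obtain ⟨N, hN⟩ : ∃ N, N = (p1 - q2) * (q1 - p2) + g * ((p1 - q1) * (p2 - q2)) := ⟨_, rfl⟩
  have e1 : 1 + (-((p2 - q2) / (p1 - q2)) + (p2 - q2) / (q1 - p2) -
      (p2 - q2) / (p1 - q2) * ((p2 - q2) / (q1 - p2))) * g = N / ((p1 - q2) * (q1 - p2)) := by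
    rw [hN]; field_simp; ring
  have e2 : 1 + (-((p1 - q1) / (p2 - q1)) + (p1 - q1) / (q2 - p1) -
      (p1 - q1) / (p2 - q1) * ((p1 - q1) / (q2 - p1))) * g = N / ((p1 - q2) * (q1 - p2)) := by
    rw [hN]; field_simp; ring
  rw [e1] at hd1 ⊢
  rw [e2] at hd2 ⊢
  have hN0 : N ≠ 0 := by
    rintro rfl
    exact hd1 (by simp)
  simp only [Matrix.sub_mul, Matrix.add_mul, Matrix.smul_mul, h1.idem, h2.idem, t1, t2, t3, t4]
  match_scalars <;> field_simp <;> (try rw [hN]) <;> ring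

theorem adenom_eq1 {m n : ℕ} {K : Matrix (Fin n) (Fin m) ℝ} {X1 X2 : Mat m n} {p1 q1 p2 q2 : ℝ}
    (h1 : Good K X1) (h2 : Good K X2) (hp : p1 ≠ p2) (hq : q1 ≠ q2) :
    adenom K p1 q1 p2 q2 X1 X2 = (Bmat K p2 q2 p1 X2 * X1 * Atil K p2 q2 q1 X2 * K).trace := by
  have a1 : p1 - p2 ≠ 0 := sub_ne_zero.2 hp
  have a2 : q1 - q2 ≠ 0 := sub_ne_zero.2 hq
  have a3 : p2 - p1 ≠ 0 := sub_ne_zero.2 hp.symm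
  have a4 : q2 - q1 ≠ 0 := sub_ne_zero.2 hq.symm
  have := dress_trace h1 h2 (-((p2 - q2) / (p1 - p2))) (-((p2 - q2) / (q1 - q2)))
  simp only [neg_smul, sub_neg_eq_add, ← sub_eq_add_neg] at this
  simp only [adenom, Bmat, Atil]
  rw [this]
  field_simp
  ring

theorem adenom_eq2 {m n : ℕ} {K : Matrix (Fin n) (Fin m) ℝ} {X1 X2 : Mat m n} {p1 q1 p2 q2 : ℝ}
    (h1 : Good K X1) (h2 : Good K X2) (hp : p1 ≠ p2) (hq : q1 ≠ q2) :
    adenom K p1 q1 p2 q2 X1 X2 = (Amat K p1 q1 q2 X1 * X2 * Btil K p1 q1 p2 X1 * K).trace := by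
  have a1 : p1 - p2 ≠ 0 := sub_ne_zero.2 hp
  have a2 : q1 - q2 ≠ 0 := sub_ne_zero.2 hq
  have a3 : p2 - p1 ≠ 0 := sub_ne_zero.2 hp.symm
  have a4 : q2 - q1 ≠ 0 := sub_ne_zero.2 hq.symm
  simp only [adenom, Amat, Btil]
  rw [dress_trace h2 h1, tr_cyc K X1 X2]
  field_simp
  ring

theorem R_fst {m n : ℕ} (K : Matrix (Fin n) (Fin m) ℝ) (X1 X2 : Mat m n) (p1 q1 p2 q2 : ℝ) :
    (Rmap K p1 q1 p2 q2 (X1, X2)).1 = (adenom K p1 q1 p2 q2 X1 X2)⁻¹ •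
      (Bmat K p2 q2 p1 X2 * X1 * Atil K p2 q2 q1 X2) := by
  have e : (p2 - q2) / (p2 - p1) = -((p2 - q2) / (p1 - p2)) := by
    rw [← div_neg, neg_sub]
  simp only [Rmap, Bmat, Atil, e, neg_smul, sub_neg_eq_add]

theorem R_snd {m n : ℕ} (K : Matrix (Fin n) (Fin m) ℝ) (X1 X2 : Mat m n) (p1 q1 p2 q2 : ℝ) :
    (Rmap K p1 q1 p2 q2 (X1, X2)).2 = (adenom K p1 q1 p2 q2 X1 X2)⁻¹ •
      (Amat K p1 q1 q2 X1 * X2 * Btil K p1 q1 p2 X1) := by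
  have e : (p1 - q1) / (p1 - p2) = -((p1 - q1) / (p2 - p1)) := by
    rw [← div_neg, neg_sub]
  simp only [Rmap, Amat, Btil, e, neg_smul, sub_neg_eq_add]

/-- Lax identity of `R`, half form -/
theorem R_half {m n : ℕ} {K : Matrix (Fin n) (Fin m) ℝ} {X1 X2 : Mat m n} {p1 q1 p2 q2 l : ℝ}
    (h1 : Good K X1) (h2 : Good K X2) (hp : p1 ≠ p2) (hq : q1 ≠ q2)
    (hl1 : l ≠ q1) (hl2 : l ≠ q2) (hd : adenom K p1 q1 p2 q2 X1 X2 ≠ 0) :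
    ((p2 - q2) / (l - q2)) • (Rmap K p1 q1 p2 q2 (X1, X2)).2
      + ((p1 - q1) / (l - q1)) • (Rmap K p1 q1 p2 q2 (X1, X2)).1
      - ((p2 - q2) / (l - q2) * ((p1 - q1) / (l - q1))) •
        ((Rmap K p1 q1 p2 q2 (X1, X2)).2 * K * (Rmap K p1 q1 p2 q2 (X1, X2)).1) =
    ((p1 - q1) / (l - q1)) • X1 + ((p2 - q2) / (l - q2)) • X2
      - ((p2 - q2) / (l - q2) * ((p1 - q1) / (l - q1))) • (X1 * K * X2) := by
  have a1 : p1 - p2 ≠ 0 := sub_ne_zero.2 hp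
  have a2 : q1 - q2 ≠ 0 := sub_ne_zero.2 hq
  have a3 : p2 - p1 ≠ 0 := sub_ne_zero.2 hp.symm
  have a4 : q2 - q1 ≠ 0 := sub_ne_zero.2 hq.symm
  have a5 : l - q1 ≠ 0 := sub_ne_zero.2 hl1
  have a6 : l - q2 ≠ 0 := sub_ne_zero.2 hl2
  have t1 := good_trip (Y := X2) h1
  have t2 := good_trip (Y := X1) h2
  have t3 : X1 * K * X2 * K * X2 = X1 * K * X2 := by
    rw [Matrix.mul_assoc _ K X2, Matrix.mul_assoc _ X2, ← Matrix.mul_assoc X2, h2.idem]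
  have t4 : X2 * K * X1 * K * X1 = X2 * K * X1 := by
    rw [Matrix.mul_assoc _ K X1, Matrix.mul_assoc _ X1, ← Matrix.mul_assoc X1, h1.idem]
  have d1 := dress_expand (X := X1) h2 (-((p2 - q2) / (p1 - p2))) (-((p2 - q2) / (q1 - q2)))
  simp only [neg_smul, sub_neg_eq_add, ← sub_eq_add_neg] at d1
  rw [R_fst, R_snd]
  simp only [adenom, Amat, Btil, Bmat, Atil] at *
  rw [dress_expand h1, d1]
  rw [tr_cyc K X1 X2] at *
  generalize hg : (K * X1 * K * X2).trace = g at *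
  obtain ⟨N, hN⟩ : ∃ N, N = (p2 - p1) * (q2 - q1) - g * ((p1 - q1) * (p2 - q2)) := ⟨_, rfl⟩
  have e1 : 1 - (p1 - q1) * (p2 - q2) / ((p2 - p1) * (q2 - q1)) * g
      = N / ((p2 - p1) * (q2 - q1)) := by
    rw [hN]; field_simp
  rw [e1] at hd ⊢
  have hN0 : N ≠ 0 := by
    rintro rfl
    exact hd (by simp)
  simp only [Matrix.sub_mul, Matrix.add_mul, Matrix.mul_sub, Matrix.mul_add, Matrix.smul_mul,
    Matrix.mul_smul, ← Matrix.mul_assoc, h1.idem, h2.idem, t1, t2, t3, t4]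
  match_scalars <;> field_simp <;> (try rw [hN]) <;> ring

section lax
variable {m n : ℕ} {K : Matrix (Fin n) (Fin m) ℝ} {X1 X2 : Mat m n} {p1 q1 p2 q2 l : ℝ}

theorem T_A (h1 : Good K X1) (h2 : Good K X2) (h12 : p1 ≠ q2) (h21 : p2 ≠ q1)
    (hl1 : l ≠ q1) (hl2 : l ≠ q2)
    (hd1 : Tden1 K p1 q1 p2 q2 X1 X2 ≠ 0) (hd2 : Tden2 K p1 q1 p2 q2 X1 X2 ≠ 0) :
    Amat K p1 q1 l (Tmap K p1 q1 p2 q2 (X1, X2)).1 * Amat K p2 q2 l X2 =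
      Amat K p2 q2 l (Tmap K p1 q1 p2 q2 (X1, X2)).2 * Amat K p1 q1 l X1 :=
  lax_A (T_half h1 h2 h12 h21 hl1 hl2 hd1 hd2)

theorem T_At (h1 : Good K X1) (h2 : Good K X2) (h12 : p1 ≠ q2) (h21 : p2 ≠ q1)
    (hl1 : l ≠ q1) (hl2 : l ≠ q2)
    (hd1 : Tden1 K p1 q1 p2 q2 X1 X2 ≠ 0) (hd2 : Tden2 K p1 q1 p2 q2 X1 X2 ≠ 0) :
    Atil K p1 q1 l (Tmap K p1 q1 p2 q2 (X1, X2)).1 * Atil K p2 q2 l X2 =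
      Atil K p2 q2 l (Tmap K p1 q1 p2 q2 (X1, X2)).2 * Atil K p1 q1 l X1 :=
  lax_At (T_half h1 h2 h12 h21 hl1 hl2 hd1 hd2)

theorem R_A (h1 : Good K X1) (h2 : Good K X2) (hp : p1 ≠ p2) (hq : q1 ≠ q2)
    (hl1 : l ≠ q1) (hl2 : l ≠ q2) (hd : adenom K p1 q1 p2 q2 X1 X2 ≠ 0) :
    Amat K p2 q2 l (Rmap K p1 q1 p2 q2 (X1, X2)).2 *
        Amat K p1 q1 l (Rmap K p1 q1 p2 q2 (X1, X2)).1 =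
      Amat K p1 q1 l X1 * Amat K p2 q2 l X2 :=
  lax_A (R_half h1 h2 hp hq hl1 hl2 hd)

theorem R_At (h1 : Good K X1) (h2 : Good K X2) (hp : p1 ≠ p2) (hq : q1 ≠ q2)
    (hl1 : l ≠ q1) (hl2 : l ≠ q2) (hd : adenom K p1 q1 p2 q2 X1 X2 ≠ 0) :
    Atil K p2 q2 l (Rmap K p1 q1 p2 q2 (X1, X2)).2 *
        Atil K p1 q1 l (Rmap K p1 q1 p2 q2 (X1, X2)).1 =
      Atil K p1 q1 l X1 * Atil K p2 q2 l X2 :=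
  lax_At (R_half h1 h2 hp hq hl1 hl2 hd)

theorem T_good1 (h1 : Good K X1) (hd1 : Tden1 K p1 q1 p2 q2 X1 X2 ≠ 0) :
    Good K (Tmap K p1 q1 p2 q2 (X1, X2)).1 :=
  good_norm h1 _ _ _ rfl hd1

theorem T_good2 (h2 : Good K X2) (hd2 : Tden2 K p1 q1 p2 q2 X1 X2 ≠ 0) :
    Good K (Tmap K p1 q1 p2 q2 (X1, X2)).2 :=
  good_norm h2 _ _ _ rfl hd2

theorem R_good1 (h1 : Good K X1) (h2 : Good K X2) (hp : p1 ≠ p2) (hq : q1 ≠ q2)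
    (hd : adenom K p1 q1 p2 q2 X1 X2 ≠ 0) :
    Good K (Rmap K p1 q1 p2 q2 (X1, X2)).1 := by
  rw [R_fst]
  exact good_norm h1 _ _ _ (adenom_eq1 h1 h2 hp hq) hd

theorem R_good2 (h1 : Good K X1) (h2 : Good K X2) (hp : p1 ≠ p2) (hq : q1 ≠ q2)
    (hd : adenom K p1 q1 p2 q2 X1 X2 ≠ 0) :
    Good K (Rmap K p1 q1 p2 q2 (X1, X2)).2 := by
  rw [R_snd]
  exact good_norm h2 _ _ _ (adenom_eq2 h1 h2 hp hq) hd

end lax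

/-- inverting a product identity -/
theorem inv_swap {M : Type*} [Monoid M] {a b c d a' b' c' d' : M} (h : a * b = c * d)
    (ha : a * a' = 1) (hb : b * b' = 1) (hc : c' * c = 1) (hd : d' * d = 1) :
    b' * a' = d' * c' := by
  calc b' * a' = d' * (c' * c) * d * (b' * a') := by rw [hc, mul_one, hd, one_mul]
    _ = d' * c' * (c * d) * (b' * a') := by simp only [mul_assoc]
    _ = d' * c' * (a * (b * b') * a') := by rw [← h]; simp only [mul_assoc]
    _ = d' * c' := by rw [hb, mul_one, ha, mul_one]

theorem half_swap {M : Type*} [Monoid M] {a b c d a' d' : M} (h : a * b = c * d)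
    (ha : a' * a = 1) (hd : d * d' = 1) : b * d' = a' * c := by
  calc b * d' = a' * (a * b) * d' := by rw [← mul_assoc, ha, one_mul]
    _ = a' * c := by rw [h]; simp only [mul_assoc, hd, mul_one]

/-- second component of `R` expressed through the new first component -/
theorem R_snd_alt {m n : ℕ} {K : Matrix (Fin n) (Fin m) ℝ} {X1 X2 : Mat m n} {p1 q1 p2 q2 : ℝ}
    (h1 : Good K X1) (h2 : Good K X2) (hp : p1 ≠ p2) (hq : q1 ≠ q2)
    (hpq12 : p1 ≠ q2) (hpq21 : p2 ≠ q1) (hpq22 : p2 ≠ q2)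
    (hd : adenom K p1 q1 p2 q2 X1 X2 ≠ 0) :
    ∃ a : ℝ, (Rmap K p1 q1 p2 q2 (X1, X2)).2 =
      a • (Amat K p1 q1 p2 (Rmap K p1 q1 p2 q2 (X1, X2)).1 * X2 *
        Btil K p1 q1 q2 (Rmap K p1 q1 p2 q2 (X1, X2)).1) := by
  have g1 := R_good1 h1 h2 hp hq hd
  have g2 := R_good2 h1 h2 hp hq hd
  have lx := R_A (l := p2) h1 h2 hp hq hpq21 hpq22 hd
  have hh := fun l hl1 hl2 => R_half (l := l) h1 h2 hp hq hl1 hl2 hd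
  generalize (Rmap K p1 q1 p2 q2 (X1, X2)).1 = Y1 at *
  generalize (Rmap K p1 q1 p2 q2 (X1, X2)).2 = Y2 at *
  set L := Amat K p1 q1 p2 Y1 with hL
  set R := Btil K p1 q1 q2 Y1 with hR
  have hne : p2 - q2 ≠ 0 := sub_ne_zero.2 hpq22
  -- left projection
  have eL : Y2 * K * (L * X2) = L * X2 := by
    have e1 : (1 - Y2 * K) * L = Amat K p1 q1 p2 X1 * (1 - X2 * K) := by
      have := lx
      simpa only [hL, Amat, div_self hne, one_smul] using this
    have e2 := congrArg (fun M => M * X2) e1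
    simp only [Matrix.mul_assoc, Matrix.sub_mul, Matrix.one_mul] at e2
    rw [← Matrix.mul_assoc X2, h2.idem, sub_self, Matrix.mul_zero, sub_eq_zero] at e2
    simp only [Matrix.mul_assoc]
    exact e2.symm
  have eR : X2 * R * K * Y2 = X2 * R := by
    have he : q2 - q1 ≠ 0 := sub_ne_zero.2 hq.symm
    -- residue of the Lax identity, by interpolation between two regular points
    have f1 := hh (2 * q2 - q1) (fun h => he (by linarith)) (fun h => he (by linarith))
    have f2 := hh (3 * q2 - 2 * q1) (fun h => he (by linarith)) (fun h => he (by linarith))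
    have c1 : 2 * q2 - q1 - q2 = q2 - q1 := by ring
    have c2 : 2 * q2 - q1 - q1 = 2 * (q2 - q1) := by ring
    have c3 : 3 * q2 - 2 * q1 - q2 = 2 * (q2 - q1) := by ring
    have c4 : 3 * q2 - 2 * q1 - q1 = 3 * (q2 - q1) := by ring
    rw [c1, c2] at f1
    rw [c3, c4] at f2
    have f3 : Y2 - ((p1 - q1) / (q2 - q1)) • (Y2 * K * Y1) =
        X2 - ((p1 - q1) / (q2 - q1)) • (X1 * K * X2) := by
      linear_combination (norm := skip) (4 * (q2 - q1) / (p2 - q2)) • f1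
        - (6 * (q2 - q1) / (p2 - q2)) • f2
      match_scalars <;> field_simp <;> ring
    have f4 : Y2 * Atil K p1 q1 q2 Y1 = Amat K p1 q1 q2 X1 * X2 := by
      simp only [Atil, Amat, Matrix.mul_sub, Matrix.sub_mul, Matrix.mul_one, Matrix.one_mul,
        Matrix.mul_smul, Matrix.smul_mul, ← Matrix.mul_assoc]
      exact f3
    have i1 := B_mul_A (l := q2) h1 hpq12.symm hq.symm
    have i2 := At_mul_Bt (l := q2) g1 hpq12.symm hq.symm
    have f5 : X2 * R = Bmat K p1 q1 q2 X1 * Y2 := by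
      calc X2 * R = Bmat K p1 q1 q2 X1 * Amat K p1 q1 q2 X1 * X2 * R := by
            rw [i1, Matrix.one_mul]
        _ = Bmat K p1 q1 q2 X1 * (Y2 * Atil K p1 q1 q2 Y1) * R := by
            rw [f4]; simp only [Matrix.mul_assoc]
        _ = Bmat K p1 q1 q2 X1 * Y2 := by
            rw [Matrix.mul_assoc, Matrix.mul_assoc Y2, i2, Matrix.mul_one]
    rw [f5, Matrix.mul_assoc, Matrix.mul_assoc, ← Matrix.mul_assoc Y2, g2.idem]
  have eZ : (K * L * X2 * R * K * Y2).trace • Y2 = L * X2 * R := by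
    have := g2.1 (K * L * X2 * R * K)
    rw [← this]
    calc Y2 * (K * L * X2 * R * K) * Y2 = (Y2 * K * (L * X2)) * R * K * Y2 := by
          simp only [Matrix.mul_assoc]
      _ = L * (X2 * R * K * Y2) := by rw [eL]; simp only [Matrix.mul_assoc]
      _ = L * X2 * R := by rw [eR]; simp only [Matrix.mul_assoc]
  generalize (K * L * X2 * R * K * Y2).trace = s at eZ
  have hs : s ≠ 0 := by
    rintro rfl
    rw [zero_smul] at eZ
    apply h2.ne_zero
    have i1 := B_mul_A (l := p2) g1 hp.symm hpq21
    have i2 := Bt_mul_At (l := q2) g1 hpq12.symm hq.symm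
    calc X2 = (Bmat K p1 q1 p2 Y1 * L) * X2 * (R * Atil K p1 q1 q2 Y1) := by
          rw [i1, i2, Matrix.one_mul, Matrix.mul_one]
      _ = Bmat K p1 q1 p2 Y1 * (L * X2 * R) * Atil K p1 q1 q2 Y1 := by
          simp only [Matrix.mul_assoc]
      _ = 0 := by rw [← eZ]; simp
  exact ⟨s⁻¹, by rw [← eZ, smul_smul, inv_mul_cancel₀ hs, one_smul]⟩

/-- composing two dressings -/
theorem dress_comp {m n : ℕ} {X Y W : Mat m n} {s t : ℝ} {L L' : Matrix (Fin m) (Fin m) ℝ}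
    {R R' : Matrix (Fin n) (Fin n) ℝ} (h1 : X = s • (L * Y * R)) (h2 : Y = t • (L' * W * R')) :
    ∃ a : ℝ, X = a • ((L * L') * W * (R' * R)) := by
  refine ⟨s * t, ?_⟩
  rw [h1, h2]
  simp only [Matrix.mul_smul, Matrix.smul_mul, smul_smul, Matrix.mul_assoc]

/-- the mixed Yang–Baxter equation
`T₂₃ ∘ T₁₃ ∘ R₁₂ = R₁₂ ∘ T₁₃ ∘ T₂₃`. -/
theorem mixed_YangBaxter_T_T_R
    (m n : ℕ) (hm : 0 < m) (hn : 0 < n)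
    (K : Matrix (Fin n) (Fin m) ℝ) (hK : K.rank = min n m)
    (p1 q1 p2 q2 p3 q3 : ℝ)
    (hp : List.Pairwise (· ≠ ·) [p1, p2, p3])
    (hq : List.Pairwise (· ≠ ·) [q1, q2, q3])
    (hpq11 : p1 ≠ q1) (hpq12 : p1 ≠ q2) (hpq13 : p1 ≠ q3)
    (hpq21 : p2 ≠ q1) (hpq22 : p2 ≠ q2) (hpq23 : p2 ≠ q3)
    (hpq31 : p3 ≠ q1) (hpq32 : p3 ≠ q2) (hpq33 : p3 ≠ q3)
    (X1 X2 X3 : Mat m n) (hX1 : InS K X1) (hX2 : InS K X2) (hX3 : InS K X3)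
    -- intermediate triples of the two compositions
    (U V U' V' : Mat m n × Mat m n × Mat m n)
    (hU : U = R12t K p1 q1 p2 q2 (X1, X2, X3))
    (hV : V = T13t K p1 q1 p3 q3 U)
    (hU' : U' = T23t K p2 q2 p3 q3 (X1, X2, X3))
    (hV' : V' = T13t K p1 q1 p3 q3 U')
    (ha1 : adenom K p1 q1 p2 q2 X1 X2 ≠ 0)
    (hd1 : Tden1 K p1 q1 p3 q3 U.1 U.2.2 ≠ 0)
    (hd2 : Tden2 K p1 q1 p3 q3 U.1 U.2.2 ≠ 0)
    (hd3 : Tden1 K p2 q2 p3 q3 V.2.1 V.2.2 ≠ 0)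
    (hd4 : Tden2 K p2 q2 p3 q3 V.2.1 V.2.2 ≠ 0)
    (hd5 : Tden1 K p2 q2 p3 q3 X2 X3 ≠ 0)
    (hd6 : Tden2 K p2 q2 p3 q3 X2 X3 ≠ 0)
    (hd7 : Tden1 K p1 q1 p3 q3 U'.1 U'.2.2 ≠ 0)
    (hd8 : Tden2 K p1 q1 p3 q3 U'.1 U'.2.2 ≠ 0)
    (ha2 : adenom K p1 q1 p2 q2 V'.1 V'.2.1 ≠ 0) :
    T23t K p2 q2 p3 q3 V = R12t K p1 q1 p2 q2 V' := by
  simp only [List.pairwise_cons, List.mem_cons, List.not_mem_nil, or_false, forall_eq_or_imp,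
    forall_eq] at hp hq
  obtain ⟨⟨hp12, hp13⟩, hp23, -⟩ := hp
  obtain ⟨⟨hq12, hq13⟩, hq23, -⟩ := hq
  have x1 := hX1.good
  have x2 := hX2.good
  have x3 := hX3.good
  subst hU hV
  subst hU' hV'
  simp only [R12t, T13t, T23t] at *
  -- left-hand side
  have y1 := R_good1 x1 x2 hp12 hq12 ha1
  have y2 := R_good2 x1 x2 hp12 hq12 ha1
  have ry1 := R_fst K X1 X2 p1 q1 p2 q2
  have ry2 := R_snd_alt x1 x2 hp12 hq12 hpq12 hpq21 hpq22 ha1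
  have rA := R_A (l := p3) x1 x2 hp12 hq12 hpq31 hpq32 ha1
  have rAt := R_At (l := q3) x1 x2 hp12 hq12 hq13.symm hq23.symm ha1
  generalize (Rmap K p1 q1 p2 q2 (X1, X2)).1 = Y1 at *
  generalize (Rmap K p1 q1 p2 q2 (X1, X2)).2 = Y2 at *
  have z1 := T_good1 y1 hd1
  have z3 := T_good2 x3 hd2
  have tA := T_A (l := p2) y1 x3 hpq13 hpq31 hpq21 hpq23 hd1 hd2
  have tAt := T_At (l := q2) y1 x3 hpq13 hpq31 hq12.symm hq23 hd1 hd2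
  have eZ1 : (Tmap K p1 q1 p3 q3 (Y1, X3)).1 = _ • _ := rfl
  have eZ3 : (Tmap K p1 q1 p3 q3 (Y1, X3)).2 = _ • _ := rfl
  simp only at eZ1 eZ3
  generalize (Tmap K p1 q1 p3 q3 (Y1, X3)).1 = Z1 at *
  generalize (Tmap K p1 q1 p3 q3 (Y1, X3)).2 = Z3 at *
  have f2 := T_good1 y2 hd3
  have f3 := T_good2 z3 hd4
  have eF2 : (Tmap K p2 q2 p3 q3 (Y2, Z3)).1 = _ • _ := rfl
  have eF3 : (Tmap K p2 q2 p3 q3 (Y2, Z3)).2 = _ • _ := rfl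
  simp only at eF2 eF3
  rw [show Tmap K p2 q2 p3 q3 (Y2, Z3) =
    ((Tmap K p2 q2 p3 q3 (Y2, Z3)).1, (Tmap K p2 q2 p3 q3 (Y2, Z3)).2) from rfl]
  generalize (Tmap K p2 q2 p3 q3 (Y2, Z3)).1 = F2 at *
  generalize (Tmap K p2 q2 p3 q3 (Y2, Z3)).2 = F3 at *
  -- right-hand side
  have w2 := T_good1 x2 hd5
  have w3 := T_good2 x3 hd6
  have uA := T_A (l := p1) x2 x3 hpq23 hpq32 hpq12 hpq13 hd5 hd6
  have uAt := T_At (l := q1) x2 x3 hpq23 hpq32 hq12 hq13 hd5 hd6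
  have eW2 : (Tmap K p2 q2 p3 q3 (X2, X3)).1 = _ • _ := rfl
  have eW3 : (Tmap K p2 q2 p3 q3 (X2, X3)).2 = _ • _ := rfl
  simp only at eW2 eW3
  generalize (Tmap K p2 q2 p3 q3 (X2, X3)).1 = W2 at *
  generalize (Tmap K p2 q2 p3 q3 (X2, X3)).2 = W3 at *
  have g1 := T_good1 x1 hd7
  have g3 := T_good2 w3 hd8
  have eG1 : (Tmap K p1 q1 p3 q3 (X1, W3)).1 = _ • _ := rfl
  have eG3 : (Tmap K p1 q1 p3 q3 (X1, W3)).2 = _ • _ := rfl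
  simp only at eG1 eG3
  generalize (Tmap K p1 q1 p3 q3 (X1, W3)).1 = G1 at *
  generalize (Tmap K p1 q1 p3 q3 (X1, W3)).2 = G3 at *
  have h1 := R_good1 g1 w2 hp12 hq12 ha2
  have h2 := R_good2 g1 w2 hp12 hq12 ha2
  have rh1 := R_fst K G1 W2 p1 q1 p2 q2
  have rh2 := R_snd_alt g1 w2 hp12 hq12 hpq12 hpq21 hpq22 ha2
  generalize (Rmap K p1 q1 p2 q2 (G1, W2)).1 = H1 at *
  generalize (Rmap K p1 q1 p2 q2 (G1, W2)).2 = H2 at *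
  -- first component
  have c1 : Z1 = H1 := by
    have k1 := half_swap uA (B_mul_A w2 hp12 hpq12) (A_mul_B x2 hp12 hpq12)
    have k2 := half_swap uAt.symm (Bt_mul_At w3 hpq31.symm hq13) (At_mul_Bt x3 hpq31.symm hq13)
    refine good_eq z1 h1 (Z := (Amat K p3 q3 p1 X3 * Bmat K p2 q2 p1 X2) * X1 *
      (Atil K p2 q2 q1 X2 * Btil K p3 q3 q1 X3)) (dress_comp eZ1 ry1) ?_
    rw [k1, k2]
    exact dress_comp rh1 eG1
  subst c1
  have c3 : F3 = G3 := by
    have k2 := inv_swap rAt (At_mul_Bt y2 hpq23.symm hq23.symm)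
      (At_mul_Bt y1 hpq13.symm hq13.symm) (Bt_mul_At x1 hpq13.symm hq13.symm)
      (Bt_mul_At x2 hpq23.symm hq23.symm)
    refine good_eq f3 g3 (Z := (Amat K p2 q2 p3 Y2 * Amat K p1 q1 p3 Y1) * X3 *
      (Btil K p1 q1 q3 Y1 * Btil K p2 q2 q3 Y2)) (dress_comp eF3 eZ3) ?_
    rw [rA, k2]
    exact dress_comp eG3 eW3
  have c2 : F2 = H2 := by
    obtain ⟨a, ry2⟩ := ry2
    obtain ⟨b, rh2⟩ := rh2
    have k2 := inv_swap tAt (At_mul_Bt z1 hpq12.symm hq12.symm)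
      (At_mul_Bt x3 hpq32.symm hq23) (Bt_mul_At z3 hpq32.symm hq23)
      (Bt_mul_At y1 hpq12.symm hq12.symm)
    refine good_eq f2 h2 (Z := (Amat K p3 q3 p2 Z3 * Amat K p1 q1 p2 Y1) * X2 *
      (Btil K p1 q1 q2 Y1 * Btil K p3 q3 q2 Z3)) (dress_comp eF2 ry2) ?_
    rw [← tA, ← k2]
    exact dress_comp rh2 eW2
  rw [c2, c3]
end

section
/- Let p1, p2, p3, q1, q2, q3 be reals with p1, p2, p3 pairwise distinct, q1, q2, q3 pairwise distinct, and p_i ≠ q_j for all i, j, and let X1, X2, X3 ∈ S. Assume all trace denominators and α-factors occurring in the compositions below are nonzero. Then Rinv_{23}(2,3) ∘ T_{13}(1,3) ∘ T_{12}(1,2) = T_{12}(1,2) ∘ T_{13}(1,3) ∘ Rinv_{23}(2,3) as maps on the triple (X1,X2,X3), where Rinv(p_i,q_i;p_j,q_j) denotes the inverse of R(p_i,q_i;p_j,q_j), given explicitly by Rinv(p_i,q_i;p_j,q_j)(Xi,Xj) = (A_j(q_i,Xj) Xi B̃_j(p_i,Xj) / tr[A_j(q_i,Xj) Xi B̃_j(p_i,Xj)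 K], B_i(p_j,Xi) Xj Ã_i(q_j,Xi) / tr[B_i(p_j,Xi) Xj Ã_i(q_j,Xi) K]), and the subscripts indicate on which two components the maps act. -/
open Matrix

namespace MYB

set_option linter.unusedSectionVars false

variable {ι : Type} [Fintype ι] [DecidableEq ι]

/-- The square-matrix Lax factor. -/
noncomputable def L (p q l : ℝ) (P : Matrix ι ι ℝ) : Matrix ι ι ℝ :=
  1 - ((p - q) / (l - q)) • P

/-- Numerator of the dressed projection. -/
noncomputable def g (p1 q1 p2 q2 : ℝ) (P1 P2 : Matrix ι ι ℝ) : Matrix ι ι ℝ :=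
  L p2 q2 p1 P2 * P1 * L q2 p2 q1 P2

/-- The dressed projection. -/
noncomputable def f (p1 q1 p2 q2 : ℝ) (P1 P2 : Matrix ι ι ℝ) : Matrix ι ι ℝ :=
  (g p1 q1 p2 q2 P1 P2).trace⁻¹ • g p1 q1 p2 q2 P1 P2

/-- Rank-one idempotents, algebraically. -/
def Good (P : Matrix ι ι ℝ) : Prop :=
  (∀ Z, P * Z * P = (Z * P).trace • P) ∧ P.trace = 1

lemma Good.idem {P : Matrix ι ι ℝ} (h : Good P) : P * P = P := by
  have := h.1 1
  simpa [h.2] using this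

lemma Good.conj {P : Matrix ι ι ℝ} (h : Good P) (M N : Matrix ι ι ℝ)
    (ht : (M * P * N).trace ≠ 0) : Good ((M * P * N).trace⁻¹ • (M * P * N)) := by
  refine ⟨fun Z => ?_, ?_⟩
  · have h1 : M * P * N * Z * (M * P * N) = M * (P * (N * Z * M) * P) * N := by
      simp only [Matrix.mul_assoc]
    have h2 : (Z * (M * P * N)).trace = (N * Z * M * P).trace := by
      rw [show Z * (M * P * N) = (Z * M * P) * N by simp only [Matrix.mul_assoc],
        Matrix.trace_mul_comm]
      simp only [Matrix.mul_assoc]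
    simp only [Matrix.smul_mul, Matrix.mul_smul, h1, h.1, Matrix.trace_smul, h2, smul_smul,
      smul_eq_mul]
    congr 1
    ring
  · rw [Matrix.trace_smul, smul_eq_mul, inv_mul_cancel₀ ht]

lemma Good.f {P1 P2 : Matrix ι ι ℝ} (h : Good P1) {p1 q1 p2 q2 : ℝ}
    (ht : (g p1 q1 p2 q2 P1 P2).trace ≠ 0) : Good (f p1 q1 p2 q2 P1 P2) :=
  h.conj _ _ ht

lemma Good.transpose {P : Matrix ι ι ℝ} (h : Good P) : Good Pᵀ := by
  refine ⟨fun Z => ?_, by rw [Matrix.trace_transpose, h.2]⟩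
  have := congrArg Matrix.transpose (h.1 Zᵀ)
  simp only [Matrix.transpose_mul, Matrix.transpose_smul, Matrix.transpose_transpose] at this
  rw [Matrix.mul_assoc, this, ← Matrix.trace_transpose (Zᵀ * P), Matrix.transpose_mul,
    Matrix.transpose_transpose, Matrix.trace_mul_comm]

lemma L_transpose (p q l : ℝ) (P : Matrix ι ι ℝ) : (L p q l P)ᵀ = L p q l Pᵀ := by
  simp [L]

lemma g_transpose (p1 q1 p2 q2 : ℝ) (P1 P2 : Matrix ι ι ℝ) :
    g q1 p1 q2 p2 P1ᵀ P2ᵀ = (g p1 q1 p2 q2 P1 P2)ᵀ := by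
  simp [g, L_transpose, Matrix.mul_assoc]

lemma f_transpose (p1 q1 p2 q2 : ℝ) (P1 P2 : Matrix ι ι ℝ) :
    f q1 p1 q2 p2 P1ᵀ P2ᵀ = (f p1 q1 p2 q2 P1 P2)ᵀ := by
  simp [f, g_transpose]

lemma L_inv {p q l : ℝ} {P : Matrix ι ι ℝ} (h : P * P = P) (hp : l ≠ p) (hq : l ≠ q) :
    L p q l P * L q p l P = 1 := by
  have h1 := sub_ne_zero.2 hp
  have h2 := sub_ne_zero.2 hq
  simp only [L, mul_sub, sub_mul, mul_one, one_mul, Matrix.smul_mul, Matrix.mul_smul, h]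
  match_scalars <;> field_simp <;> ring

lemma L_cancel_left {p q l : ℝ} {P M N : Matrix ι ι ℝ} (h : P * P = P) (hp : l ≠ p) (hq : l ≠ q)
    (e : L p q l P * M = L p q l P * N) : M = N := by
  have := congrArg (fun Z => L q p l P * Z) e
  simpa only [← Matrix.mul_assoc, L_inv h hq hp, Matrix.one_mul] using this

lemma L_cancel_right {p q l : ℝ} {P M N : Matrix ι ι ℝ} (h : P * P = P) (hp : l ≠ p) (hq : l ≠ q)
    (e : M * L p q l P = N * L p q l P) : M = N := by
  have := congrArg (fun Z => Z * L q p l P) e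
  simpa only [Matrix.mul_assoc, L_inv h hp hq, Matrix.mul_one] using this

lemma L_inj {p q l : ℝ} {P Q : Matrix ι ι ℝ} (hpq : p ≠ q) (hq : l ≠ q)
    (e : L p q l P = L p q l Q) : P = Q := by
  have h1 : (p - q) / (l - q) ≠ 0 := div_ne_zero (sub_ne_zero.2 hpq) (sub_ne_zero.2 hq)
  exact smul_right_injective _ h1 (sub_right_injective e)

lemma tr_g {p1 q1 p2 q2 : ℝ} {P1 P2 : Matrix ι ι ℝ} (h1 : Good P1) (h2 : Good P2)
    (h12 : p1 ≠ q2) (h21 : p2 ≠ q1) :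
    (g p1 q1 p2 q2 P1 P2).trace =
      1 + (p1 - q1) * (p2 - q2) / ((q1 - p2) * (p1 - q2)) * (P1 * P2).trace := by
  have e1 := sub_ne_zero.2 h12
  have e2 := sub_ne_zero.2 h21.symm
  have h3 : (P2 * P1 * P2).trace = (P1 * P2).trace := by
    rw [Matrix.trace_mul_comm, ← Matrix.mul_assoc, h2.idem, Matrix.trace_mul_comm]
  simp only [g, L, mul_sub, sub_mul, mul_one, one_mul, Matrix.smul_mul, Matrix.mul_smul,
    Matrix.trace_sub, Matrix.trace_smul, h3, h1.2, Matrix.trace_mul_comm P2 P1, smul_eq_mul]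
  field_simp
  ring

/-- The Lax (Bianchi) relation for the map `T`. -/
lemma lax {p1 q1 p2 q2 l : ℝ} {P1 P2 : Matrix ι ι ℝ} (h1 : Good P1) (h2 : Good P2)
    (h12 : p1 ≠ q2) (h21 : p2 ≠ q1) (hl1 : l ≠ q1) (hl2 : l ≠ q2)
    (ht : (g p1 q1 p2 q2 P1 P2).trace ≠ 0) :
    L p1 q1 l (f p1 q1 p2 q2 P1 P2) * L p2 q2 l P2 =
      L p2 q2 l (f p2 q2 p1 q1 P2 P1) * L p1 q1 l P1 := by
  have e1 := sub_ne_zero.2 h12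
  have e2 := sub_ne_zero.2 h21
  have e1' := sub_ne_zero.2 h12.symm
  have e2' := sub_ne_zero.2 h21.symm
  have e3 := sub_ne_zero.2 hl1
  have e4 := sub_ne_zero.2 hl2
  have hA : P1 * P2 * P1 = (P1 * P2).trace • P1 := by
    rw [h1.1, Matrix.trace_mul_comm]
  have hB : P2 * P1 * P2 = (P1 * P2).trace • P2 := h2.1 P1
  have i1 := h1.idem
  have i2 := h2.idem
  unfold f
  rw [tr_g h2 h1 h21 h12, tr_g h1 h2 h12 h21, Matrix.trace_mul_comm P2 P1]
  rw [tr_g h1 h2 h12 h21] at ht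
  generalize (P1 * P2).trace = s at *
  have ht2 : 1 + (p2 - q2) * (p1 - q1) / ((q2 - p1) * (p2 - q1)) * s =
      1 + (p1 - q1) * (p2 - q2) / ((q1 - p2) * (p1 - q2)) * s := by
    field_simp
    ring
  rw [ht2]
  set t := 1 + (p1 - q1) * (p2 - q2) / ((q1 - p2) * (p1 - q2)) * s with htd
  have hs : (p1 - q1) * (p2 - q2) * s = (t - 1) * ((q1 - p2) * (p1 - q2)) := by
    rw [htd]; field_simp; ring
  clear_value t
  have a1 : ∀ Z, Z * P1 * P1 = Z * P1 := fun Z => by rw [Matrix.mul_assoc, i1]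
  have a2 : ∀ Z, Z * P2 * P2 = Z * P2 := fun Z => by rw [Matrix.mul_assoc, i2]
  simp only [g, L, mul_sub, sub_mul, mul_one, one_mul, Matrix.smul_mul, Matrix.mul_smul,
    ← Matrix.mul_assoc, i1, i2, a1, a2, hA, hB]
  match_scalars
  · simp
  · field_simp
    linear_combination (-(p1 - q1) * (l - q2)) * hs
  · field_simp
    ring
  · field_simp
    ring
  · field_simp
    linear_combination ((p2 - q2) * (l - q1)) * hs

/-- The refactorization relation for the inverse of `R`. -/
lemma laxR {p2 q2 p3 q3 l : ℝ} {P2 P3 : Matrix ι ι ℝ} (h2 : Good P2) (h3 : Good P3)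
    (hq : q2 ≠ q3) (hp : p2 ≠ p3) (hl1 : l ≠ p2) (hl2 : l ≠ q2) (hl3 : l ≠ q3)
    (ht : (g q2 p2 p3 q3 P2 P3).trace ≠ 0) :
    L p3 q3 l P3 * L p2 q2 l P2 =
      L p2 q2 l (f q2 p2 p3 q3 P2 P3) * L p3 q3 l (f p3 q3 q2 p2 P3 P2) := by
  have e := lax (l := l) h2 h3 hq hp.symm hl1 hl3 ht
  have i := (h2.f ht).idem
  apply L_cancel_left (p := q2) (q := p2) i hl2 hl1
  rw [← Matrix.mul_assoc, e, Matrix.mul_assoc, L_inv h2.idem hl2 hl1, ← Matrix.mul_assoc,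
    L_inv i hl2 hl1, Matrix.mul_one, Matrix.one_mul]

lemma f_f (p1 q1 p2 q2 p3 q3 : ℝ) (P1 P2 P3 : Matrix ι ι ℝ)
    (ht : (g p1 q1 p2 q2 P1 P2).trace ≠ 0) :
    f p1 q1 p3 q3 (f p1 q1 p2 q2 P1 P2) P3 =
      ((L p3 q3 p1 P3 * L p2 q2 p1 P2) * P1 * (L q2 p2 q1 P2 * L q3 p3 q1 P3)).trace⁻¹ •
        ((L p3 q3 p1 P3 * L p2 q2 p1 P2) * P1 * (L q2 p2 q1 P2 * L q3 p3 q1 P3)) := by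
  have e : g p1 q1 p3 q3 (f p1 q1 p2 q2 P1 P2) P3 = (g p1 q1 p2 q2 P1 P2).trace⁻¹ •
      ((L p3 q3 p1 P3 * L p2 q2 p1 P2) * P1 * (L q2 p2 q1 P2 * L q3 p3 q1 P3)) := by
    rw [g, f, Matrix.mul_smul, Matrix.smul_mul]
    simp only [g, Matrix.mul_assoc]
  rw [f, e, Matrix.trace_smul, smul_smul, smul_eq_mul, mul_inv, inv_inv, mul_right_comm,
    mul_inv_cancel₀ ht, one_mul]

/-- All the data. -/
structure D (ι : Type) where
  (p1 q1 p2 q2 p3 q3 : ℝ)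
  (P1 P2 P3 : Matrix ι ι ℝ)

namespace D

noncomputable def a1 (d : D ι) := f d.p1 d.q1 d.p2 d.q2 d.P1 d.P2
noncomputable def a2 (d : D ι) := f d.p2 d.q2 d.p1 d.q1 d.P2 d.P1
noncomputable def b1 (d : D ι) := f d.p1 d.q1 d.p3 d.q3 d.a1 d.P3
noncomputable def b3 (d : D ι) := f d.p3 d.q3 d.p1 d.q1 d.P3 d.a1
noncomputable def c2 (d : D ι) := f d.q2 d.p2 d.p3 d.q3 d.a2 d.b3
noncomputable def c3 (d : D ι) := f d.p3 d.q3 d.q2 d.p2 d.b3 d.a2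
noncomputable def d2 (d : D ι) := f d.q2 d.p2 d.p3 d.q3 d.P2 d.P3
noncomputable def d3 (d : D ι) := f d.p3 d.q3 d.q2 d.p2 d.P3 d.P2
noncomputable def e1 (d : D ι) := f d.p1 d.q1 d.p3 d.q3 d.P1 d.d3
noncomputable def e3 (d : D ι) := f d.p3 d.q3 d.p1 d.q1 d.d3 d.P1
noncomputable def h1 (d : D ι) := f d.p1 d.q1 d.p2 d.q2 d.e1 d.d2
noncomputable def h2 (d : D ι) := f d.p2 d.q2 d.p1 d.q1 d.d2 d.e1

/-- Transposed data. -/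
def swap (d : D ι) : D ι := ⟨d.q1, d.p1, d.q2, d.p2, d.q3, d.p3, d.P1ᵀ, d.P2ᵀ, d.P3ᵀ⟩

lemma a1s (d : D ι) : d.swap.a1 = d.a1ᵀ := f_transpose ..
lemma a2s (d : D ι) : d.swap.a2 = d.a2ᵀ := f_transpose ..
lemma b1s (d : D ι) : d.swap.b1 = d.b1ᵀ := by rw [b1, a1s]; exact f_transpose ..
lemma b3s (d : D ι) : d.swap.b3 = d.b3ᵀ := by rw [b3, a1s]; exact f_transpose ..
lemma c2s (d : D ι) : d.swap.c2 = d.c2ᵀ := by rw [c2, a2s, b3s]; exact f_transpose ..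
lemma c3s (d : D ι) : d.swap.c3 = d.c3ᵀ := by rw [c3, a2s, b3s]; exact f_transpose ..
lemma d2s (d : D ι) : d.swap.d2 = d.d2ᵀ := f_transpose ..
lemma d3s (d : D ι) : d.swap.d3 = d.d3ᵀ := f_transpose ..
lemma e1s (d : D ι) : d.swap.e1 = d.e1ᵀ := by rw [e1, d3s]; exact f_transpose ..
lemma e3s (d : D ι) : d.swap.e3 = d.e3ᵀ := by rw [e3, d3s]; exact f_transpose ..
lemma h1s (d : D ι) : d.swap.h1 = d.h1ᵀ := by rw [h1, e1s, d2s]; exact f_transpose ..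
lemma h2s (d : D ι) : d.swap.h2 = d.h2ᵀ := by rw [h2, e1s, d2s]; exact f_transpose ..

/-- All the hypotheses. -/
structure Ok (d : D ι) : Prop where
  p12 : d.p1 ≠ d.p2
  p13 : d.p1 ≠ d.p3
  p23 : d.p2 ≠ d.p3
  q12 : d.q1 ≠ d.q2
  q13 : d.q1 ≠ d.q3
  q23 : d.q2 ≠ d.q3
  x11 : d.p1 ≠ d.q1
  x12 : d.p1 ≠ d.q2
  x13 : d.p1 ≠ d.q3
  x21 : d.p2 ≠ d.q1
  x22 : d.p2 ≠ d.q2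
  x23 : d.p2 ≠ d.q3
  x31 : d.p3 ≠ d.q1
  x32 : d.p3 ≠ d.q2
  x33 : d.p3 ≠ d.q3
  g1 : Good d.P1
  g2 : Good d.P2
  g3 : Good d.P3
  t1 : (g d.p1 d.q1 d.p2 d.q2 d.P1 d.P2).trace ≠ 0
  t2 : (g d.p2 d.q2 d.p1 d.q1 d.P2 d.P1).trace ≠ 0
  t3 : (g d.p1 d.q1 d.p3 d.q3 d.a1 d.P3).trace ≠ 0
  t4 : (g d.p3 d.q3 d.p1 d.q1 d.P3 d.a1).trace ≠ 0
  t5 : (g d.q2 d.p2 d.p3 d.q3 d.a2 d.b3).trace ≠ 0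
  t6 : (g d.p3 d.q3 d.q2 d.p2 d.b3 d.a2).trace ≠ 0
  t7 : (g d.q2 d.p2 d.p3 d.q3 d.P2 d.P3).trace ≠ 0
  t8 : (g d.p3 d.q3 d.q2 d.p2 d.P3 d.P2).trace ≠ 0
  t9 : (g d.p1 d.q1 d.p3 d.q3 d.P1 d.d3).trace ≠ 0
  t10 : (g d.p3 d.q3 d.p1 d.q1 d.d3 d.P1).trace ≠ 0
  t11 : (g d.p1 d.q1 d.p2 d.q2 d.e1 d.d2).trace ≠ 0
  t12 : (g d.p2 d.q2 d.p1 d.q1 d.d2 d.e1).trace ≠ 0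

lemma g_tr {p1 q1 p2 q2 : ℝ} {P1 P2 : Matrix ι ι ℝ} (h : (g p1 q1 p2 q2 P1 P2).trace ≠ 0) :
    (g q1 p1 q2 p2 P1ᵀ P2ᵀ).trace ≠ 0 := by
  rwa [g_transpose, Matrix.trace_transpose]

lemma Ok.swap {d : D ι} (h : d.Ok) : d.swap.Ok where
  p12 := h.q12
  p13 := h.q13
  p23 := h.q23
  q12 := h.p12
  q13 := h.p13
  q23 := h.p23
  x11 := h.x11.symm
  x12 := h.x21.symm
  x13 := h.x31.symm
  x21 := h.x12.symm
  x22 := h.x22.symm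
  x23 := h.x32.symm
  x31 := h.x13.symm
  x32 := h.x23.symm
  x33 := h.x33.symm
  g1 := h.g1.transpose
  g2 := h.g2.transpose
  g3 := h.g3.transpose
  t1 := g_tr h.t1
  t2 := g_tr h.t2
  t3 := by rw [a1s]; exact g_tr h.t3
  t4 := by rw [a1s]; exact g_tr h.t4
  t5 := by rw [a2s, b3s]; exact g_tr h.t5
  t6 := by rw [a2s, b3s]; exact g_tr h.t6
  t7 := g_tr h.t7
  t8 := g_tr h.t8
  t9 := by rw [d3s]; exact g_tr h.t9
  t10 := by rw [d3s]; exact g_tr h.t10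
  t11 := by rw [e1s, d2s]; exact g_tr h.t11
  t12 := by rw [e1s, d2s]; exact g_tr h.t12

lemma Ok.first {d : D ι} (h : d.Ok) : d.b1 = d.h1 := by
  have r1 := laxR (l := d.p1) h.g2 h.g3 h.q23 h.p23 h.p12 h.x12 h.x13 h.t7
  have r2 := laxR (l := d.q1) h.g2.transpose h.g3.transpose h.p23 h.q23
    h.q12 h.x21.symm h.x31.symm (g_tr h.t7)
  rw [f_transpose, f_transpose] at r2
  replace r2 := congrArg Matrix.transpose r2
  simp only [Matrix.transpose_mul, L_transpose, Matrix.transpose_transpose] at r2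
  rw [b1, a1, f_f _ _ _ _ _ _ _ _ _ h.t1, h1, e1, f_f _ _ _ _ _ _ _ _ _ h.t9, r1, r2]
  rfl

lemma Ok.chain {d : D ι} (h : d.Ok) {l : ℝ} (k1 : l ≠ d.p1) (k2 : l ≠ d.p2)
    (j1 : l ≠ d.q1) (j2 : l ≠ d.q2) (j3 : l ≠ d.q3) :
    L d.p2 d.q2 l d.c2 * L d.p3 d.q3 l d.c3 = L d.p2 d.q2 l d.h2 * L d.p3 d.q3 l d.e3 := by
  have ga1 : Good d.a1 := h.g1.f h.t1
  have ga2 : Good d.a2 := h.g2.f h.t2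
  have gb3 : Good d.b3 := h.g3.f h.t4
  have gd2 : Good d.d2 := h.g2.f h.t7
  have gd3 : Good d.d3 := h.g3.f h.t8
  have ge1 : Good d.e1 := h.g1.f h.t9
  have r1 : _ = L d.p2 d.q2 l d.a2 * _ :=
    lax (l := l) h.g1 h.g2 h.x12 h.x21 j1 j2 h.t1
  have r2 : _ = L d.p3 d.q3 l d.b3 * _ :=
    lax (l := l) ga1 h.g3 h.x13 h.x31 j1 j3 h.t3
  have r3 : _ = L d.p2 d.q2 l d.c2 * L d.p3 d.q3 l d.c3 :=
    laxR (l := l) ga2 gb3 h.q23 h.p23 k2 j2 j3 h.t5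
  have s1 : _ = L d.p2 d.q2 l d.d2 * L d.p3 d.q3 l d.d3 :=
    laxR (l := l) h.g2 h.g3 h.q23 h.p23 k2 j2 j3 h.t7
  have s2 : L d.p1 d.q1 l d.e1 * _ = L d.p3 d.q3 l d.e3 * _ :=
    lax (l := l) h.g1 gd3 h.x13 h.x31 j1 j3 h.t9
  have s3 : L d.p1 d.q1 l d.h1 * _ = L d.p2 d.q2 l d.h2 * _ :=
    lax (l := l) ge1 gd2 h.x12 h.x21 j1 j2 h.t11
  change L d.p1 d.q1 l d.b1 * _ = _ at r2
  change L d.p1 d.q1 l d.a1 * _ = _ at r1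
  apply L_cancel_right h.g1.idem k1 j1
  calc L d.p2 d.q2 l d.c2 * L d.p3 d.q3 l d.c3 * L d.p1 d.q1 l d.P1
      = L d.p1 d.q1 l d.b1 * (L d.p3 d.q3 l d.P3 * L d.p2 d.q2 l d.P2) := by
        rw [← r3, Matrix.mul_assoc, ← r1, ← Matrix.mul_assoc, ← r2, Matrix.mul_assoc]
    _ = L d.p1 d.q1 l d.h1 * (L d.p2 d.q2 l d.d2 * L d.p3 d.q3 l d.d3) := by
        rw [h.first, s1]
    _ = _ := by
        rw [← Matrix.mul_assoc, s3, Matrix.mul_assoc, s2, Matrix.mul_assoc]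

lemma aux {p2 q2 p3 q3 : ℝ} {C2 C3 H2 E3 : Matrix ι ι ℝ} (i3 : C3 * C3 = C3) (j2 : H2 * H2 = H2)
    (k1 : p3 ≠ p2) (k2 : p3 ≠ q2) (k3 : p3 ≠ q3)
    (e : L p2 q2 p3 C2 * L p3 q3 p3 C3 = L p2 q2 p3 H2 * L p3 q3 p3 E3) : E3 * C3 = C3 := by
  have hL : ∀ Z : Matrix ι ι ℝ, L p3 q3 p3 Z = 1 - Z := fun Z => by
    rw [L, div_self (sub_ne_zero.2 k3), one_smul]
  rw [hL, hL] at e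
  have e2 := congrArg (fun Z => Z * C3) e
  simp only [Matrix.mul_assoc, sub_mul, one_mul, i3, sub_self, mul_zero] at e2
  have e3 : L p2 q2 p3 H2 * (C3 - E3 * C3) = L p2 q2 p3 H2 * 0 := by rw [← e2, mul_zero]
  exact (sub_eq_zero.1 (L_cancel_left j2 k1 k2 e3)).symm

lemma Ok.third_aux {d : D ι} (h : d.Ok) : d.e3 * d.c3 = d.c3 ∧ d.c3 * d.e3 = d.e3 := by
  have ga2 : Good d.a2 := h.g2.f h.t2
  have gb3 : Good d.b3 := h.g3.f h.t4
  have gc2 : Good d.c2 := ga2.f h.t5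
  have gc3 : Good d.c3 := gb3.f h.t6
  have gd2 : Good d.d2 := h.g2.f h.t7
  have gd3 : Good d.d3 := h.g3.f h.t8
  have ge3 : Good d.e3 := gd3.f h.t10
  have gh2 : Good d.h2 := gd2.f h.t12
  have e := h.chain (l := d.p3) h.p13.symm h.p23.symm h.x31 h.x32 h.x33
  exact ⟨aux gc3.idem gh2.idem h.p23.symm h.x32 h.x33 e,
    aux ge3.idem gc2.idem h.p23.symm h.x32 h.x33 e.symm⟩

lemma Ok.third {d : D ι} (h : d.Ok) : d.c3 = d.e3 := by
  have e1 := h.third_aux.2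
  have e2 := congrArg Matrix.transpose h.swap.third_aux.1
  rw [e3s, c3s, Matrix.transpose_mul, Matrix.transpose_transpose, Matrix.transpose_transpose] at e2
  rw [← e1, e2]

lemma Ok.second {d : D ι} (h : d.Ok) : d.c2 = d.h2 := by
  have gd3 : Good d.d3 := h.g3.f h.t8
  have ge3 : Good d.e3 := gd3.f h.t10
  obtain ⟨l, hl⟩ := Infinite.exists_notMem_finset ({d.p1, d.p2, d.p3, d.q1, d.q2, d.q3} : Finset ℝ)
  simp only [Finset.mem_insert, Finset.mem_singleton, not_or] at hl
  obtain ⟨k1, k2, k3, j1, j2, j3⟩ := hl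
  have e := h.chain (l := l) k1 k2 j1 j2 j3
  rw [h.third] at e
  exact L_inj h.x22 j2 (L_cancel_right ge3.idem k3 j3 e)

end D

/-! Transfer to `K`-projections. -/

section transfer

variable {m n : ℕ} (K : Matrix (Fin n) (Fin m) ℝ)

/-- Embedding of `m × n` matrices, with product `X K Y`, into square matrices. -/
noncomputable def phi (X : Mat m n) : Matrix (Fin m ⊕ Fin n) (Fin m ⊕ Fin n) ℝ :=
  Matrix.fromBlocks (X * K) X 0 0

lemma phi_inj {X Y : Mat m n} (h : phi K X = phi K Y) : X = Y :=
  (Matrix.fromBlocks_inj.1 h).2.1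

lemma phi_mul (X Y : Mat m n) : phi K X * phi K Y = phi K (X * K * Y) := by
  simp [phi, Matrix.fromBlocks_multiply, Matrix.mul_assoc]

lemma phi_smul (c : ℝ) (X : Mat m n) : phi K (c • X) = c • phi K X := by
  simp [phi, Matrix.fromBlocks_smul]

lemma phi_sub (X Y : Mat m n) : phi K (X - Y) = phi K X - phi K Y := by
  ext (i | i) (j | j) <;> simp [phi, Matrix.sub_mul]

lemma phi_trace (X : Mat m n) : (phi K X).trace = (X * K).trace := by
  simp [phi, Matrix.trace, Matrix.diag]

lemma phi_dress (a b : ℝ) (X Y : Mat m n) :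
    phi K ((1 - a • (Y * K)) * X * (1 - b • (K * Y))) =
      (1 - a • phi K Y) * phi K X * (1 - b • phi K Y) := by
  have : (1 - a • (Y * K)) * X * (1 - b • (K * Y)) =
      X - a • (Y * K * X) - b • (X * K * Y - a • (Y * K * X * K * Y)) := by
    simp only [Matrix.sub_mul, Matrix.mul_sub, Matrix.one_mul, Matrix.mul_one, Matrix.smul_mul,
      Matrix.mul_smul, Matrix.mul_assoc]
  rw [this]
  simp only [phi_sub, phi_smul, ← phi_mul, sub_mul, mul_sub, one_mul, mul_one, Matrix.smul_mul,
      Matrix.mul_smul, smul_sub]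

lemma Bmat_eq (p q l : ℝ) (X : Mat m n) : Bmat K p q l X = 1 - ((q - p) / (l - p)) • (X * K) := by
  rw [Bmat, ← neg_sub q p, neg_div, neg_smul, ← sub_eq_add_neg]

lemma Btil_eq (p q l : ℝ) (X : Mat m n) : Btil K p q l X = 1 - ((q - p) / (l - p)) • (K * X) := by
  rw [Btil, ← neg_sub q p, neg_div, neg_smul, ← sub_eq_add_neg]

lemma num_T1 (p1 q1 p2 q2 : ℝ) (X1 X2 : Mat m n) :
    phi K (Amat K p2 q2 p1 X2 * X1 * Btil K p2 q2 q1 X2) =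
      g p1 q1 p2 q2 (phi K X1) (phi K X2) := by
  rw [Btil_eq, Amat, phi_dress]; rfl

lemma num_R2 (p1 q1 p2 q2 : ℝ) (X1 X2 : Mat m n) :
    phi K (Bmat K p1 q1 p2 X1 * X2 * Atil K p1 q1 q2 X1) =
      g p2 q2 q1 p1 (phi K X2) (phi K X1) := by
  rw [Bmat_eq, Atil, phi_dress]; rfl

lemma den_T1 (p1 q1 p2 q2 : ℝ) (X1 X2 : Mat m n) :
    Tden1 K p1 q1 p2 q2 X1 X2 = (g p1 q1 p2 q2 (phi K X1) (phi K X2)).trace := by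
  rw [← num_T1, phi_trace]; rfl

lemma den_T2 (p1 q1 p2 q2 : ℝ) (X1 X2 : Mat m n) :
    Tden2 K p1 q1 p2 q2 X1 X2 = (g p2 q2 p1 q1 (phi K X2) (phi K X1)).trace := by
  rw [← num_T1, phi_trace]; rfl

lemma den_R1 (p1 q1 p2 q2 : ℝ) (X1 X2 : Mat m n) :
    Rinvden1 K p1 q1 p2 q2 X1 X2 = (g q1 p1 p2 q2 (phi K X1) (phi K X2)).trace := by
  rw [← num_T1, phi_trace]; rfl

lemma den_R2 (p1 q1 p2 q2 : ℝ) (X1 X2 : Mat m n) :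
    Rinvden2 K p1 q1 p2 q2 X1 X2 = (g p2 q2 q1 p1 (phi K X2) (phi K X1)).trace := by
  rw [← num_R2, phi_trace]; rfl

lemma phi_T1 (p1 q1 p2 q2 : ℝ) (X : Mat m n × Mat m n) :
    phi K (Tmap K p1 q1 p2 q2 X).1 = f p1 q1 p2 q2 (phi K X.1) (phi K X.2) := by
  rw [Tmap, phi_smul, num_T1, den_T1]; rfl

lemma phi_T2 (p1 q1 p2 q2 : ℝ) (X : Mat m n × Mat m n) :
    phi K (Tmap K p1 q1 p2 q2 X).2 = f p2 q2 p1 q1 (phi K X.2) (phi K X.1) := by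
  rw [Tmap, phi_smul, num_T1, den_T2]; rfl

lemma phi_R1 (p1 q1 p2 q2 : ℝ) (X : Mat m n × Mat m n) :
    phi K (Rinvmap K p1 q1 p2 q2 X).1 = f q1 p1 p2 q2 (phi K X.1) (phi K X.2) := by
  rw [Rinvmap, phi_smul, num_T1, den_R1]; rfl

lemma phi_R2 (p1 q1 p2 q2 : ℝ) (X : Mat m n × Mat m n) :
    phi K (Rinvmap K p1 q1 p2 q2 X).2 = f p2 q2 q1 p1 (phi K X.2) (phi K X.1) := by
  rw [Rinvmap, phi_smul, num_R2, den_R2]; rfl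

lemma exists_vec {X : Mat m n} (h : X.rank = 1) :
    ∃ (u : Fin m → ℝ) (v : Fin n → ℝ), X = Matrix.vecMulVec u v := by
  rw [Matrix.rank, finrank_eq_one_iff'] at h
  obtain ⟨u, -, hu⟩ := h
  choose c hc using fun j : Fin n => hu ⟨X.mulVecLin (Pi.single j 1), LinearMap.mem_range_self _ _⟩
  refine ⟨u, c, ?_⟩
  ext i j
  have := congrFun (congrArg Subtype.val (hc j)) i
  simp [Matrix.mulVec_single_one] at this
  rw [Matrix.vecMulVec_apply, mul_comm, this]

lemma good_phi {X : Mat m n} (h : InS K X) : Good (phi K X) := by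
  obtain ⟨hX, hr⟩ := h
  obtain ⟨u, v, rfl⟩ := exists_vec hr
  have hp : phi K (Matrix.vecMulVec u v) =
      Matrix.vecMulVec (Sum.elim u 0) (Sum.elim (v ᵥ* K) v) := by
    rw [phi, Matrix.vecMulVec_mul]
    ext (i | i) (j | j) <;> simp [Matrix.vecMulVec_apply]
  have hid : phi K (Matrix.vecMulVec u v) * phi K (Matrix.vecMulVec u v) =
    phi K (Matrix.vecMulVec u v) := by rw [phi_mul, hX]
  have hne : phi K (Matrix.vecMulVec u v) ≠ 0 := by
    intro h0
    have : Matrix.vecMulVec u v = 0 := phi_inj K (h0.trans (by simp [phi]))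
    rw [this, Matrix.rank_zero] at hr
    exact zero_ne_one hr
  rw [hp] at hid hne ⊢
  generalize Sum.elim u 0 = x at *
  generalize Sum.elim (v ᵥ* K) v = y at *
  have key : ∀ Z, Matrix.vecMulVec x y * Z * Matrix.vecMulVec x y =
      (Z * Matrix.vecMulVec x y).trace • Matrix.vecMulVec x y := by
    intro Z
    rw [Matrix.mul_assoc, Matrix.mul_vecMulVec, Matrix.vecMulVec_mul_vecMulVec,
      Matrix.trace_vecMulVec, dotProduct_comm]
    first | rfl | simp [Matrix.vecMulVec_smul, Matrix.smul_vecMulVec]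
  refine ⟨key, ?_⟩
  have k1 := key 1
  rw [Matrix.mul_one, Matrix.one_mul, hid] at k1
  have k2 : ((Matrix.vecMulVec x y).trace - 1) • Matrix.vecMulVec x y = 0 := by
    rw [sub_smul, one_smul, ← k1, sub_self]
  exact sub_eq_zero.1 ((smul_eq_zero.1 k2).resolve_right hne)

end transfer

end MYB

/-- the mixed Yang–Baxter equation
`Rinv₂₃ ∘ T₁₃ ∘ T₁₂ = T₁₂ ∘ T₁₃ ∘ Rinv₂₃`. -/
theorem mixed_YangBaxter_Rinv_T_T
    (m n : ℕ) (hm : 0 < m) (hn : 0 < n)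
    (K : Matrix (Fin n) (Fin m) ℝ) (hK : K.rank = min n m)
    (p1 q1 p2 q2 p3 q3 : ℝ)
    (hp : List.Pairwise (· ≠ ·) [p1, p2, p3])
    (hq : List.Pairwise (· ≠ ·) [q1, q2, q3])
    (hpq11 : p1 ≠ q1) (hpq12 : p1 ≠ q2) (hpq13 : p1 ≠ q3)
    (hpq21 : p2 ≠ q1) (hpq22 : p2 ≠ q2) (hpq23 : p2 ≠ q3)
    (hpq31 : p3 ≠ q1) (hpq32 : p3 ≠ q2) (hpq33 : p3 ≠ q3)
    (X1 X2 X3 : Mat m n) (hX1 : InS K X1) (hX2 : InS K X2) (hX3 : InS K X3)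
    -- intermediate triples of the two compositions
    (U V U' V' : Mat m n × Mat m n × Mat m n)
    (hU : U = T12t K p1 q1 p2 q2 (X1, X2, X3))
    (hV : V = T13t K p1 q1 p3 q3 U)
    (hU' : U' = Rinv23t K p2 q2 p3 q3 (X1, X2, X3))
    (hV' : V' = T13t K p1 q1 p3 q3 U')
    -- every trace denominator occurring is nonzero
    (hd1 : Tden1 K p1 q1 p2 q2 X1 X2 ≠ 0)
    (hd2 : Tden2 K p1 q1 p2 q2 X1 X2 ≠ 0)
    (hd3 : Tden1 K p1 q1 p3 q3 U.1 U.2.2 ≠ 0)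
    (hd4 : Tden2 K p1 q1 p3 q3 U.1 U.2.2 ≠ 0)
    (hd5 : Rinvden1 K p2 q2 p3 q3 V.2.1 V.2.2 ≠ 0)
    (hd6 : Rinvden2 K p2 q2 p3 q3 V.2.1 V.2.2 ≠ 0)
    (hd7 : Rinvden1 K p2 q2 p3 q3 X2 X3 ≠ 0)
    (hd8 : Rinvden2 K p2 q2 p3 q3 X2 X3 ≠ 0)
    (hd9 : Tden1 K p1 q1 p3 q3 U'.1 U'.2.2 ≠ 0)
    (hd10 : Tden2 K p1 q1 p3 q3 U'.1 U'.2.2 ≠ 0)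
    (hd11 : Tden1 K p1 q1 p2 q2 V'.1 V'.2.1 ≠ 0)
    (hd12 : Tden2 K p1 q1 p2 q2 V'.1 V'.2.1 ≠ 0) :
    Rinv23t K p2 q2 p3 q3 V = T12t K p1 q1 p2 q2 V' := by
  subst hV hV' hU hU'
  obtain ⟨hp1, hp2, hp3⟩ : p1 ≠ p2 ∧ p1 ≠ p3 ∧ p2 ≠ p3 := by
    simp at hp
    exact ⟨hp.1.1, hp.1.2, hp.2⟩
  obtain ⟨hq1, hq2, hq3⟩ : q1 ≠ q2 ∧ q1 ≠ q3 ∧ q2 ≠ q3 := by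
    simp at hq
    exact ⟨hq.1.1, hq.1.2, hq.2⟩
  simp only [T12t, T13t, Rinv23t, MYB.den_T1, MYB.den_T2, MYB.den_R1, MYB.den_R2,
    MYB.phi_T1, MYB.phi_T2, MYB.phi_R1, MYB.phi_R2] at hd1 hd2 hd3 hd4 hd5 hd6 hd7 hd8 hd9 hd10 hd11 hd12
  have ok : MYB.D.Ok ⟨p1, q1, p2, q2, p3, q3, MYB.phi K X1, MYB.phi K X2, MYB.phi K X3⟩ :=
    ⟨hp1, hp2, hp3, hq1, hq2, hq3, hpq11, hpq12, hpq13, hpq21, hpq22, hpq23, hpq31, hpq32, hpq33,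
      MYB.good_phi K hX1, MYB.good_phi K hX2, MYB.good_phi K hX3,
      hd1, hd2, hd3, hd4, hd5, hd6, hd7, hd8, hd9, hd10, hd11, hd12⟩
  refine Prod.ext (MYB.phi_inj K ?_) (Prod.ext (MYB.phi_inj K ?_) (MYB.phi_inj K ?_))
  · simp only [T12t, T13t, Rinv23t, MYB.phi_T1, MYB.phi_T2, MYB.phi_R1, MYB.phi_R2]
    exact ok.first
  · simp only [T12t, T13t, Rinv23t, MYB.phi_T1, MYB.phi_T2, MYB.phi_R1, MYB.phi_R2]
    exact ok.second
  · simp only [T12t, T13t, Rinv23t, MYB.phi_T1, MYB.phi_T2, MYB.phi_R1, MYB.phi_R2]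
    exact ok.third
end

section
/- There exist m, n, a real n×m matrix K of maximal rank, pairwise distinct reals p1, p2, p3, q1, q2, q3 with p_i ≠ q_j for all i, j, and rank-one K-projections X1, X2, X3 such that all trace denominators occurring below are nonzero and T_{12}(1,2) ∘ T_{13}(1,3) ∘ T_{23}(2,3) applied to (X1,X2,X3) differs from T_{23}(2,3) ∘ T_{13}(1,3) ∘ T_{12}(1,2) applied to (X1,X2,X3); that is, the map T is not a Yang–Baxter map. -/
open Matrix

/-- The column `K = (1,0)ᵀ`. -/
def colK : Matrix (Fin 2) (Fin 1) ℝ := !![1; 0]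

/-- The row `(1,x)`. -/
def rowV (x : ℝ) : Mat 1 2 := !![1, x]

lemma rowV_mul_colK (x : ℝ) : rowV x * colK = 1 := by
  ext i j
  fin_cases i; fin_cases j
  simp [rowV, colK, Matrix.mul_apply, Fin.sum_univ_two]

lemma colK_rank : colK.rank = 1 := by
  apply le_antisymm
  · simpa using colK.rank_le_width
  · have h := Matrix.rank_mul_le_right (rowV 0) colK
    rw [rowV_mul_colK] at h
    simpa using h

lemma rowV_inS (x : ℝ) : InS colK (rowV x) := by
  refine ⟨by rw [rowV_mul_colK, Matrix.one_mul], le_antisymm ?_ ?_⟩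
  · simpa using (rowV x).rank_le_height
  · have h := Matrix.rank_mul_le_left (rowV x) colK
    rw [rowV_mul_colK] at h
    simpa using h

lemma core (p q lam mu x y : ℝ) :
    Amat colK p q lam (rowV y) * rowV x * Btil colK p q mu (rowV y) =
      (1 - (p - q) / (lam - q)) • (rowV x + ((p - q) / (mu - p)) • rowV y) := by
  have h : Amat colK p q lam (rowV y) = (1 - (p - q) / (lam - q)) • 1 := by
    rw [Amat, rowV_mul_colK, sub_smul, one_smul]
  rw [h, Btil, Matrix.smul_mul, Matrix.one_mul, Matrix.smul_mul, Matrix.mul_add, Matrix.mul_one,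
    Matrix.mul_smul, ← Matrix.mul_assoc, rowV_mul_colK, Matrix.one_mul]

lemma core_trace (p q lam mu x y : ℝ) :
    (Amat colK p q lam (rowV y) * rowV x * Btil colK p q mu (rowV y) * colK).trace =
      (1 - (p - q) / (lam - q)) * (1 + (p - q) / (mu - p)) := by
  rw [core, Matrix.smul_mul, Matrix.add_mul, Matrix.smul_mul, rowV_mul_colK, rowV_mul_colK]
  simp
  ring

lemma tden1 (p1 q1 p2 q2 x y : ℝ) : Tden1 colK p1 q1 p2 q2 (rowV x) (rowV y) =
    (1 - (p2 - q2) / (p1 - q2)) * (1 + (p2 - q2) / (q1 - p2)) := core_trace _ _ _ _ _ _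

lemma tden2 (p1 q1 p2 q2 x y : ℝ) : Tden2 colK p1 q1 p2 q2 (rowV x) (rowV y) =
    (1 - (p1 - q1) / (p2 - q1)) * (1 + (p1 - q1) / (q2 - p1)) := core_trace _ _ _ _ _ _

lemma core_norm (a c x y : ℝ) (ha : a ≠ 0) (hc : 1 + c ≠ 0) :
    (a * (1 + c))⁻¹ • (a • (rowV x + c • rowV y)) = rowV ((x + c * y) / (1 + c)) := by
  ext i j
  fin_cases i; fin_cases j <;> simp [rowV] <;> field_simp

lemma tmap (p1 q1 p2 q2 x y : ℝ) (h1 : 1 - (p2 - q2) / (p1 - q2) ≠ 0)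
    (h2 : 1 + (p2 - q2) / (q1 - p2) ≠ 0) (h3 : 1 - (p1 - q1) / (p2 - q1) ≠ 0)
    (h4 : 1 + (p1 - q1) / (q2 - p1) ≠ 0) :
    Tmap colK p1 q1 p2 q2 (rowV x, rowV y) =
      (rowV ((x + (p2 - q2) / (q1 - p2) * y) / (1 + (p2 - q2) / (q1 - p2))),
       rowV ((y + (p1 - q1) / (q2 - p1) * x) / (1 + (p1 - q1) / (q2 - p1)))) := by
  simp only [Tmap, tden1, tden2, core]
  rw [core_norm _ _ _ _ h1 h2, core_norm _ _ _ _ h3 h4]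

lemma tmap12 (x y : ℝ) : Tmap colK 0 3 1 4 (rowV x, rowV y) =
    (rowV (-2 * x + 3 * y), rowV (4 * y - 3 * x)) := by
  rw [tmap _ _ _ _ _ _ (by norm_num) (by norm_num) (by norm_num) (by norm_num)]
  congr 2 <;> ring

lemma tmap13 (x y : ℝ) : Tmap colK 0 3 2 5 (rowV x, rowV y) =
    (rowV ((-x + 3 * y) / 2), rowV ((5 * y - 3 * x) / 2)) := by
  rw [tmap _ _ _ _ _ _ (by norm_num) (by norm_num) (by norm_num) (by norm_num)]
  congr 2 <;> ring

lemma tmap23 (x y : ℝ) : Tmap colK 1 4 2 5 (rowV x, rowV y) =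
    (rowV (-2 * x + 3 * y), rowV (4 * y - 3 * x)) := by
  rw [tmap _ _ _ _ _ _ (by norm_num) (by norm_num) (by norm_num) (by norm_num)]
  congr 2 <;> ring

/-- the map `T` is not a Yang–Baxter map. -/
theorem T_is_not_YangBaxter :
    ∃ (m n : ℕ) (K : Matrix (Fin n) (Fin m) ℝ)
      (p1 p2 p3 q1 q2 q3 : ℝ) (X1 X2 X3 : Mat m n),
      0 < m ∧ 0 < n ∧ K.rank = min n m ∧
      List.Pairwise (· ≠ ·) [p1, p2, p3, q1, q2, q3] ∧
      InS K X1 ∧ InS K X2 ∧ InS K X3 ∧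
      -- all trace denominators in the composition T₁₂ ∘ T₁₃ ∘ T₂₃ are nonzero
      Tden1 K p2 q2 p3 q3 X2 X3 ≠ 0 ∧ Tden2 K p2 q2 p3 q3 X2 X3 ≠ 0 ∧
      Tden1 K p1 q1 p3 q3 (T23t K p2 q2 p3 q3 (X1, X2, X3)).1
        (T23t K p2 q2 p3 q3 (X1, X2, X3)).2.2 ≠ 0 ∧
      Tden2 K p1 q1 p3 q3 (T23t K p2 q2 p3 q3 (X1, X2, X3)).1
        (T23t K p2 q2 p3 q3 (X1, X2, X3)).2.2 ≠ 0 ∧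
      Tden1 K p1 q1 p2 q2 (T13t K p1 q1 p3 q3 (T23t K p2 q2 p3 q3 (X1, X2, X3))).1
        (T13t K p1 q1 p3 q3 (T23t K p2 q2 p3 q3 (X1, X2, X3))).2.1 ≠ 0 ∧
      Tden2 K p1 q1 p2 q2 (T13t K p1 q1 p3 q3 (T23t K p2 q2 p3 q3 (X1, X2, X3))).1
        (T13t K p1 q1 p3 q3 (T23t K p2 q2 p3 q3 (X1, X2, X3))).2.1 ≠ 0 ∧
      -- all trace denominators in the composition T₂₃ ∘ T₁₃ ∘ T₁₂ are nonzero
      Tden1 K p1 q1 p2 q2 X1 X2 ≠ 0 ∧ Tden2 K p1 q1 p2 q2 X1 X2 ≠ 0 ∧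
      Tden1 K p1 q1 p3 q3 (T12t K p1 q1 p2 q2 (X1, X2, X3)).1
        (T12t K p1 q1 p2 q2 (X1, X2, X3)).2.2 ≠ 0 ∧
      Tden2 K p1 q1 p3 q3 (T12t K p1 q1 p2 q2 (X1, X2, X3)).1
        (T12t K p1 q1 p2 q2 (X1, X2, X3)).2.2 ≠ 0 ∧
      Tden1 K p2 q2 p3 q3 (T13t K p1 q1 p3 q3 (T12t K p1 q1 p2 q2 (X1, X2, X3))).2.1
        (T13t K p1 q1 p3 q3 (T12t K p1 q1 p2 q2 (X1, X2, X3))).2.2 ≠ 0 ∧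
      Tden2 K p2 q2 p3 q3 (T13t K p1 q1 p3 q3 (T12t K p1 q1 p2 q2 (X1, X2, X3))).2.1
        (T13t K p1 q1 p3 q3 (T12t K p1 q1 p2 q2 (X1, X2, X3))).2.2 ≠ 0 ∧
      -- and the two compositions disagree
      T12t K p1 q1 p2 q2 (T13t K p1 q1 p3 q3 (T23t K p2 q2 p3 q3 (X1, X2, X3)))
        ≠ T23t K p2 q2 p3 q3 (T13t K p1 q1 p3 q3 (T12t K p1 q1 p2 q2 (X1, X2, X3))) := by
  refine ⟨1, 2, colK, 0, 1, 2, 3, 4, 5, rowV 1, rowV 0, rowV 0, one_pos, two_pos,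
    by rw [colK_rank]; rfl, by norm_num, rowV_inS _, rowV_inS _, rowV_inS _, ?_⟩
  simp only [T12t, T13t, T23t, tmap12, tmap13, tmap23, tden1, tden2]
  refine ⟨by norm_num, by norm_num, by norm_num, by norm_num, by norm_num, by norm_num,
    by norm_num, by norm_num, by norm_num, by norm_num, by norm_num, by norm_num, ?_⟩
  intro h
  have h2 := congrArg (fun X : Mat 1 2 × Mat 1 2 × Mat 1 2 => X.2.2 0 1) h
  norm_num [rowV] at h2
end

section
/- Let p1, p2, p3, q1, q2, q3 be reals such that p_i ≠ q_j for all i, j. For i ≠ j define the 2×2 matrix R(i,j) = (1/(p_i−q_j))·[[p_i−p_j, p_i−q_i],[p_j−q_j, q_i−q_j]], and let R̂_{12}, R̂_{13}, R̂_{23} be the 3×3 matrices obtained by placing the entries of R(1,2), R(1,3), R(2,3) in the rows and columns indexed by the corresponding pair of indices and the entry 1 on the remaining diagonal position (all other entries 0). Then the Yang–Baxter equation holds in matrix form: R̂_{12} R̂_{13} R̂_{23} = R̂_{23} R̂_{13} R̂_{12}. -/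
open Matrix

/-- The 2×2 linear Yang–Baxter matrix
`R(i,j) = (1/(pᵢ−qⱼ)) · [[pᵢ−pⱼ, pᵢ−qᵢ],[pⱼ−qⱼ, qᵢ−qⱼ]]`. -/
noncomputable def R2 (pi qi pj qj : ℝ) : Matrix (Fin 2) (Fin 2) ℝ :=
  (pi - qj)⁻¹ • Matrix.of ![![pi - pj, pi - qi], ![pj - qj, qi - qj]]

/-- `R(1,2)` embedded in 3×3 matrices: it acts on slots 1 and 2 and as identity on slot 3. -/
noncomputable def Rh12 (p1 q1 p2 q2 : ℝ) : Matrix (Fin 3) (Fin 3) ℝ :=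
  Matrix.of ![![R2 p1 q1 p2 q2 0 0, R2 p1 q1 p2 q2 0 1, 0],
              ![R2 p1 q1 p2 q2 1 0, R2 p1 q1 p2 q2 1 1, 0],
              ![0, 0, 1]]

/-- `R(1,3)` embedded in 3×3 matrices: it acts on slots 1 and 3 and as identity on slot 2. -/
noncomputable def Rh13 (p1 q1 p3 q3 : ℝ) : Matrix (Fin 3) (Fin 3) ℝ :=
  Matrix.of ![![R2 p1 q1 p3 q3 0 0, 0, R2 p1 q1 p3 q3 0 1],
              ![0, 1, 0],
              ![R2 p1 q1 p3 q3 1 0, 0, R2 p1 q1 p3 q3 1 1]]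

/-- `R(2,3)` embedded in 3×3 matrices: it acts on slots 2 and 3 and as identity on slot 1. -/
noncomputable def Rh23 (p2 q2 p3 q3 : ℝ) : Matrix (Fin 3) (Fin 3) ℝ :=
  Matrix.of ![![1, 0, 0],
              ![0, R2 p2 q2 p3 q3 0 0, R2 p2 q2 p3 q3 0 1],
              ![0, R2 p2 q2 p3 q3 1 0, R2 p2 q2 p3 q3 1 1]]

/-- the matrix form of the Yang–Baxter equation
`R̂₁₂ R̂₁₃ R̂₂₃ = R̂₂₃ R̂₁₃ R̂₁₂` for the linear (vector soliton) R-matrix. -/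
theorem Rmatrix_YangBaxter (p1 p2 p3 q1 q2 q3 : ℝ)
    (h11 : p1 ≠ q1) (h12 : p1 ≠ q2) (h13 : p1 ≠ q3)
    (h21 : p2 ≠ q1) (h22 : p2 ≠ q2) (h23 : p2 ≠ q3)
    (h31 : p3 ≠ q1) (h32 : p3 ≠ q2) (h33 : p3 ≠ q3) :
    Rh12 p1 q1 p2 q2 * Rh13 p1 q1 p3 q3 * Rh23 p2 q2 p3 q3
      = Rh23 p2 q2 p3 q3 * Rh13 p1 q1 p3 q3 * Rh12 p1 q1 p2 q2 := by
  have d12 : p1 - q2 ≠ 0 := sub_ne_zero.mpr h12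
  have d13 : p1 - q3 ≠ 0 := sub_ne_zero.mpr h13
  have d23 : p2 - q3 ≠ 0 := sub_ne_zero.mpr h23
  ext i j
  fin_cases i <;> fin_cases j <;>
    simp [Rh12, Rh13, Rh23, R2, Matrix.mul_apply, Fin.sum_univ_three] <;>
    field_simp <;> ring
end

section
/- Let m, n, N be positive integers, K a real n×m matrix, φ0 : ℝ² × ℤ → ℝ^{m×n} a twice continuously differentiable (in x, y) solution of the p2DTL_K equation φ_{xy} − φ⁺ + 2φ − φ⁻ = (φ⁺ − φ) K φ_y − φ_y K (φ − φ⁻). Let θ : ℝ² × ℤ → ℝ^{m×N}, χ : ℝ² × ℤ → ℝ^{N×n}, Ω : ℝ² × ℤ → ℝ^{N×N} be differentiable functions satisfying θ_x = θ⁺ − θ + (φ0⁺ − φ0) K θ, θ_y = θ − θ⁻ − φ0_y K θ⁻; χ_x = χ − χ⁻ − χ K (φ0⁺ − φ0), χ_y = χ⁺ − χ + χ⁺ K φ0_y⁺; and Ω − Ω⁻ = −χ K θ, Ω_x = −χ K θ⁺, Ω_y = −χ⁺ K θ − χ⁺ K φ0_y⁺ θ. Assume Ω(x,y,k) is invertible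 for all (x,y,k) and that θ, χ, Ω are twice continuously differentiable. Then φ := φ0 − θ (Ω⁻)^{-1} χ⁻ is again a solution of the p2DTL_K equation. -/
open Matrix

/-- Entrywise partial derivative with respect to the first (continuous) variable `x`. -/
noncomputable def pdX {a b : Type*} (f : ℝ → ℝ → ℤ → Matrix a b ℝ) (x y : ℝ) (k : ℤ) :
    Matrix a b ℝ :=
  Matrix.of fun i j => deriv (fun s => f s y k i j) x

/-- Entrywise partial derivative with respect to the second (continuous) variable `y`. -/
noncomputable def pdY {a b : Type*} (f : ℝ → ℝ → ℤ → Matrix a b ℝ) (x y : ℝ) (k : ℤ) :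
    Matrix a b ℝ :=
  Matrix.of fun i j => deriv (fun s => f x s k i j) y

/-- The matrix potential two-dimensional Toda lattice (p2DTL_K) equation
`φ_{xy} − φ⁺ + 2φ − φ⁻ = (φ⁺ − φ) K φ_y − φ_y K (φ − φ⁻)`. -/
def IsP2DTL {m n : ℕ} (K : Matrix (Fin n) (Fin m) ℝ)
    (φ : ℝ → ℝ → ℤ → Matrix (Fin m) (Fin n) ℝ) : Prop :=
  ∀ (x y : ℝ) (k : ℤ),
    pdY (pdX φ) x y k - φ x y (k + 1) + 2 • φ x y k - φ x y (k - 1)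
      = (φ x y (k + 1) - φ x y k) * K * pdY φ x y k
        - pdY φ x y k * K * (φ x y k - φ x y (k - 1))

/-- Entrywise derivative of a matrix-valued curve. -/
def HasMD {a b : Type*} (f : ℝ → Matrix a b ℝ) (f' : Matrix a b ℝ) (x : ℝ) : Prop :=
  ∀ i j, HasDerivAt (fun s => f s i j) (f' i j) x

namespace HasMD

theorem sub {a b : Type*} {f g : ℝ → Matrix a b ℝ} {f' g' : Matrix a b ℝ} {x : ℝ}
    (hf : HasMD f f' x) (hg : HasMD g g' x) : HasMD (fun s => f s - g s) (f' - g') x :=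
  fun i j => (hf i j).sub (hg i j)

theorem add {a b : Type*} {f g : ℝ → Matrix a b ℝ} {f' g' : Matrix a b ℝ} {x : ℝ}
    (hf : HasMD f f' x) (hg : HasMD g g' x) : HasMD (fun s => f s + g s) (f' + g') x :=
  fun i j => (hf i j).add (hg i j)

theorem const {a b : Type*} (c : Matrix a b ℝ) (x : ℝ) : HasMD (fun _ => c) 0 x :=
  fun i j => hasDerivAt_const x (c i j)

theorem mul {a b c : Type*} [Fintype b] {f : ℝ → Matrix a b ℝ} {g : ℝ → Matrix b c ℝ}
    {f' : Matrix a b ℝ} {g' : Matrix b c ℝ} {x : ℝ}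
    (hf : HasMD f f' x) (hg : HasMD g g' x) :
    HasMD (fun s => f s * g s) (f' * g x + f x * g') x := by
  intro i j
  simp only [Matrix.mul_apply, Matrix.add_apply, ← Finset.sum_add_distrib]
  exact HasDerivAt.fun_sum fun l _ => (hf i l).mul (hg l j)

theorem unique {a b : Type*} {f : ℝ → Matrix a b ℝ} {f' g' : Matrix a b ℝ} {x : ℝ}
    (hf : HasMD f f' x) (hg : HasMD f g' x) : f' = g' := by
  ext i j
  exact (hf i j).unique (hg i j)

theorem mulK {a b c : Type*} [Fintype b] {f : ℝ → Matrix a b ℝ} (K : Matrix b c ℝ)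
    {f' : Matrix a b ℝ} {x : ℝ} (hf : HasMD f f' x) :
    HasMD (fun s => f s * K) (f' * K) x := by
  have := hf.mul (HasMD.const K x)
  simpa using this

theorem inv {N : ℕ} {f : ℝ → Matrix (Fin N) (Fin N) ℝ} {f' : Matrix (Fin N) (Fin N) ℝ} {x : ℝ}
    (hf : HasMD f f' x) (hu : ∀ s, IsUnit (f s)) :
    HasMD (fun s => (f s)⁻¹) (-((f x)⁻¹ * f' * (f x)⁻¹)) x := by
  have hdet : ∀ g : ℝ → Matrix (Fin N) (Fin N) ℝ,
      (∀ i j, DifferentiableAt ℝ (fun s => g s i j) x) →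
      DifferentiableAt ℝ (fun s => (g s).det) x := by
    intro g hg
    simp only [Matrix.det_apply']
    refine DifferentiableAt.fun_sum fun σ _ => ?_
    refine DifferentiableAt.const_mul ?_ _
    exact DifferentiableAt.fun_finsetProd fun i _ => hg _ _
  have hd : ∀ i j, DifferentiableAt ℝ (fun s => (f s)⁻¹ i j) x := by
    intro i j
    simp only [Matrix.inv_def, Matrix.smul_apply, Ring.inverse_eq_inv', smul_eq_mul,
      Matrix.adjugate_apply]
    refine DifferentiableAt.mul (DifferentiableAt.inv (hdet f fun i j => (hf i j).differentiableAt)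
      ?_) (hdet _ ?_)
    · exact ((Matrix.isUnit_iff_isUnit_det _).1 (hu x)).ne_zero
    · intro i' j'
      simp only [Matrix.updateRow_apply]
      split_ifs
      · exact differentiableAt_const _
      · exact (hf i' j').differentiableAt
  have hW : HasMD (fun s => (f s)⁻¹) (Matrix.of fun i j => deriv (fun s => (f s)⁻¹ i j) x) x :=
    fun i j => (hd i j).hasDerivAt
  set D : Matrix (Fin N) (Fin N) ℝ := Matrix.of fun i j => deriv (fun s => (f s)⁻¹ i j) x
  have h1 := hf.mul hW
  have h2 : (fun s => f s * (f s)⁻¹) = fun _ => (1 : Matrix (Fin N) (Fin N) ℝ) := by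
    funext s
    exact Matrix.mul_nonsing_inv _ ((Matrix.isUnit_iff_isUnit_det _).1 (hu s))
  rw [h2] at h1
  have h3 := h1.unique (HasMD.const 1 x)
  have h4 : (f x)⁻¹ * f x = 1 :=
    Matrix.nonsing_inv_mul _ ((Matrix.isUnit_iff_isUnit_det _).1 (hu x))
  have h5 : D = -((f x)⁻¹ * f' * (f x)⁻¹) := by
    have h6 : f x * D = -(f' * (f x)⁻¹) := by
      rw [eq_neg_iff_add_eq_zero, add_comm]; exact h3
    calc D = ((f x)⁻¹ * f x) * D := by rw [h4, one_mul]
      _ = (f x)⁻¹ * (f x * D) := mul_assoc _ _ _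
      _ = _ := by rw [h6, mul_neg, mul_assoc]
  rw [← h5]; exact hW

end HasMD

theorem HasMD.pdX_eq {a b : Type*} {f : ℝ → ℝ → ℤ → Matrix a b ℝ} {x y : ℝ} {k : ℤ}
    {f' : Matrix a b ℝ} (h : HasMD (fun s => f s y k) f' x) : pdX f x y k = f' := by
  ext i j
  exact (h i j).deriv

theorem HasMD.pdY_eq {a b : Type*} {f : ℝ → ℝ → ℤ → Matrix a b ℝ} {x y : ℝ} {k : ℤ}
    {f' : Matrix a b ℝ} (h : HasMD (fun s => f x s k) f' y) : pdY f x y k = f' := by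
  ext i j
  exact (h i j).deriv

theorem hasMD_pdX {a b : Type*} {f : ℝ → ℝ → ℤ → Matrix a b ℝ}
    (hf : ∀ k i j, ContDiff ℝ 2 (fun pt : ℝ × ℝ => f pt.1 pt.2 k i j)) (x y : ℝ) (k : ℤ) :
    HasMD (fun s => f s y k) (pdX f x y k) x := by
  intro i j
  have h1 : Differentiable ℝ (fun pt : ℝ × ℝ => f pt.1 pt.2 k i j) :=
    (hf k i j).differentiable (by norm_num)
  have h2 : Differentiable ℝ (fun s : ℝ => (s, y)) := by fun_prop
  exact ((h1.comp h2) x).hasDerivAt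

theorem hasMD_pdY {a b : Type*} {f : ℝ → ℝ → ℤ → Matrix a b ℝ}
    (hf : ∀ k i j, ContDiff ℝ 2 (fun pt : ℝ × ℝ => f pt.1 pt.2 k i j)) (x y : ℝ) (k : ℤ) :
    HasMD (fun s => f x s k) (pdY f x y k) y := by
  intro i j
  have h1 : Differentiable ℝ (fun pt : ℝ × ℝ => f pt.1 pt.2 k i j) :=
    (hf k i j).differentiable (by norm_num)
  have h2 : Differentiable ℝ (fun s : ℝ => (x, s)) := by fun_prop
  exact ((h1.comp h2) y).hasDerivAt

theorem hasMD_pdYX {a b : Type*} {f : ℝ → ℝ → ℤ → Matrix a b ℝ}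
    (hf : ∀ k i j, ContDiff ℝ 2 (fun pt : ℝ × ℝ => f pt.1 pt.2 k i j)) (x y : ℝ) (k : ℤ) :
    HasMD (fun s => pdX f x s k) (pdY (pdX f) x y k) y := by
  intro i j
  have key : (fun s => pdX f x s k i j) =
      fun s => fderiv ℝ (fun pt : ℝ × ℝ => f pt.1 pt.2 k i j) (x, s) (1, 0) := by
    funext s
    have h1 : HasFDerivAt (fun pt : ℝ × ℝ => f pt.1 pt.2 k i j)
        (fderiv ℝ (fun pt : ℝ × ℝ => f pt.1 pt.2 k i j) (x, s)) (x, s) :=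
      ((hf k i j).differentiable (by norm_num) _).hasFDerivAt
    have h2 : HasDerivAt (fun t : ℝ => (t, s)) ((1 : ℝ), (0 : ℝ)) x :=
      (hasDerivAt_id x).prodMk (hasDerivAt_const x s)
    exact (h1.comp_hasDerivAt x h2).deriv
  have h3 : Differentiable ℝ (fderiv ℝ (fun pt : ℝ × ℝ => f pt.1 pt.2 k i j)) :=
    ((hf k i j).fderiv_right (m := 1) (by norm_num)).differentiable (by norm_num)
  have h4 : DifferentiableAt ℝ (fun s => pdX f x s k i j) y := by
    rw [key]
    fun_prop
  exact h4.hasDerivAt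

/-- The purely algebraic part of the verification. -/
theorem darboux_algebra {m n N : ℕ}
    (K : Matrix (Fin n) (Fin m) ℝ)
    (fm f fp um u up : Matrix (Fin m) (Fin n) ℝ)
    (tm t tp : Matrix (Fin m) (Fin N) ℝ)
    (cmm cm c : Matrix (Fin N) (Fin n) ℝ)
    (wm w wp : Matrix (Fin N) (Fin N) ℝ)
    (r1 : wp * (c * (K * (t * w))) = wp - w)
    (r2 : w * (cm * (K * (tm * wm))) = w - wm)
    (F ty tpy cmmy cmy wy G Y : _)
    (hF : F - fp + 2 • f - fm = (fp - f) * K * u - u * K * (f - fm))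
    (hty : ty = t - tm - u * K * tm)
    (htpy : tpy = tp - t - up * K * t)
    (hcmy : cmy = c - cm + c * K * u)
    (hcmmy : cmmy = cm - cmm + cm * K * um)
    (hwy : wy = -(w * (-(c * K * tm) - c * K * u * K * tm) * w))
    (hG : G = F - ((((tpy - ty) + ((up - u) * K * t + (fp - f) * K * ty)) * w
            + (tp - t + (fp - f) * K * t) * wy) * cm
            + (tp - t + (fp - f) * K * t) * w * cmy)
        - (((((ty * w + t * wy) * cm + t * w * cmy) * K * t + t * w * cm * K * ty) * w
            + t * w * cm * K * t * wy) * cm + t * w * cm * K * t * w * cmy)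
        - ((ty * w + t * wy) * (cm - cmm - cm * K * (f - fm))
            + t * w * (cmy - cmmy - (cmy * K * (f - fm) + cm * K * (u - um)))))
    (hY : Y = u - ((ty * w + t * wy) * cm + t * w * cmy)) :
    G - (fp - tp * wp * c) + 2 • (f - t * w * cm) - (fm - tm * wm * cmm)
      = ((fp - tp * wp * c) - (f - t * w * cm)) * K * Y
        - Y * K * ((f - t * w * cm) - (fm - tm * wm * cmm)) := by
  have r1' : ∀ Z : Matrix (Fin N) (Fin n) ℝ,
      wp * (c * (K * (t * (w * Z)))) = wp * Z - w * Z := by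
    intro Z
    rw [← Matrix.sub_mul, ← r1]; simp only [Matrix.mul_assoc]
  have r2' : ∀ Z : Matrix (Fin N) (Fin n) ℝ,
      w * (cm * (K * (tm * (wm * Z)))) = w * Z - wm * Z := by
    intro Z
    rw [← Matrix.sub_mul, ← r2]; simp only [Matrix.mul_assoc]
  have hF' : F = fp - 2 • f + fm + ((fp - f) * K * u - u * K * (f - fm)) := by
    rw [← hF]; abel
  subst hG hY hwy hty htpy hcmy hcmmy
  subst hF'
  simp only [two_smul, Matrix.mul_assoc, Matrix.mul_add, Matrix.add_mul, Matrix.mul_sub,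
    Matrix.sub_mul, Matrix.neg_mul, Matrix.mul_neg, r1', r2']
  abel

/-- the binary Darboux transformation produces a new solution of p2DTL_K. -/
theorem binary_darboux_p2DTL
    (m n N : ℕ) (hm : 0 < m) (hn : 0 < n) (hN : 0 < N)
    (K : Matrix (Fin n) (Fin m) ℝ)
    (φ0 : ℝ → ℝ → ℤ → Matrix (Fin m) (Fin n) ℝ)
    (θ : ℝ → ℝ → ℤ → Matrix (Fin m) (Fin N) ℝ)
    (χ : ℝ → ℝ → ℤ → Matrix (Fin N) (Fin n) ℝ)
    (Ω : ℝ → ℝ → ℤ → Matrix (Fin N) (Fin N) ℝ)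
    -- smoothness (twice continuous differentiability in (x,y), entrywise)
    (hφ0smooth : ∀ (k : ℤ) (i : Fin m) (j : Fin n),
      ContDiff ℝ 2 (fun pt : ℝ × ℝ => φ0 pt.1 pt.2 k i j))
    (hθsmooth : ∀ (k : ℤ) (i : Fin m) (j : Fin N),
      ContDiff ℝ 2 (fun pt : ℝ × ℝ => θ pt.1 pt.2 k i j))
    (hχsmooth : ∀ (k : ℤ) (i : Fin N) (j : Fin n),
      ContDiff ℝ 2 (fun pt : ℝ × ℝ => χ pt.1 pt.2 k i j))
    (hΩsmooth : ∀ (k : ℤ) (i : Fin N) (j : Fin N),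
      ContDiff ℝ 2 (fun pt : ℝ × ℝ => Ω pt.1 pt.2 k i j))
    -- the seed solution
    (hφ0 : IsP2DTL K φ0)
    -- the linear system for θ
    (hθx : ∀ (x y : ℝ) (k : ℤ), pdX θ x y k
      = θ x y (k + 1) - θ x y k + (φ0 x y (k + 1) - φ0 x y k) * K * θ x y k)
    (hθy : ∀ (x y : ℝ) (k : ℤ), pdY θ x y k
      = θ x y k - θ x y (k - 1) - pdY φ0 x y k * K * θ x y (k - 1))
    -- the adjoint linear system for χ
    (hχx : ∀ (x y : ℝ) (k : ℤ), pdX χ x y k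
      = χ x y k - χ x y (k - 1) - χ x y k * K * (φ0 x y (k + 1) - φ0 x y k))
    (hχy : ∀ (x y : ℝ) (k : ℤ), pdY χ x y k
      = χ x y (k + 1) - χ x y k + χ x y (k + 1) * K * pdY φ0 x y (k + 1))
    -- the equations for the Darboux potential Ω
    (hΩshift : ∀ (x y : ℝ) (k : ℤ), Ω x y k - Ω x y (k - 1) = -(χ x y k * K * θ x y k))
    (hΩx : ∀ (x y : ℝ) (k : ℤ), pdX Ω x y k = -(χ x y k * K * θ x y (k + 1)))
    (hΩy : ∀ (x y : ℝ) (k : ℤ), pdY Ω x y k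
      = -(χ x y (k + 1) * K * θ x y k)
        - χ x y (k + 1) * K * pdY φ0 x y (k + 1) * K * θ x y k)
    -- invertibility of Ω
    (hΩinv : ∀ (x y : ℝ) (k : ℤ), IsUnit (Ω x y k)) :
    IsP2DTL K (fun x y k => φ0 x y k - θ x y k * (Ω x y (k - 1))⁻¹ * χ x y (k - 1)) := by
  have hu : ∀ x y k, IsUnit (Ω x y k).det := fun x y k =>
    (Matrix.isUnit_iff_isUnit_det _).1 (hΩinv x y k)
  -- the new `x`-derivative
  have hX : ∀ x y k, pdX (fun x y k => φ0 x y k - θ x y k * (Ω x y (k - 1))⁻¹ * χ x y (k - 1)) x y k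
      = pdX φ0 x y k
        - (θ x y (k + 1) - θ x y k + (φ0 x y (k + 1) - φ0 x y k) * K * θ x y k)
            * (Ω x y (k - 1))⁻¹ * χ x y (k - 1)
        - θ x y k * (Ω x y (k - 1))⁻¹ * χ x y (k - 1) * K * θ x y k
            * (Ω x y (k - 1))⁻¹ * χ x y (k - 1)
        - θ x y k * (Ω x y (k - 1))⁻¹ * (χ x y (k - 1) - χ x y (k - 1 - 1)
            - χ x y (k - 1) * K * (φ0 x y k - φ0 x y (k - 1))) := by
    intro x y k
    have h := (hasMD_pdX hφ0smooth x y k).sub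
      (((hasMD_pdX hθsmooth x y k).mul ((hasMD_pdX hΩsmooth x y (k - 1)).inv
        (fun s => hΩinv s y (k - 1)))).mul (hasMD_pdX hχsmooth x y (k - 1)))
    rw [HasMD.pdX_eq (f := fun x y k => φ0 x y k - θ x y k * (Ω x y (k - 1))⁻¹ * χ x y (k - 1)) h,
      hθx, hΩx, hχx, sub_add_cancel]
    simp only [Matrix.mul_assoc, Matrix.mul_add, Matrix.add_mul, Matrix.mul_sub,
      Matrix.sub_mul, Matrix.neg_mul, Matrix.mul_neg]
    abel
  intro x y k
  have dφ := hasMD_pdY hφ0smooth x y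
  have dθ := hasMD_pdY hθsmooth x y
  have dχ := hasMD_pdY hχsmooth x y
  have dW := (hasMD_pdY hΩsmooth x y (k - 1)).inv (fun s => hΩinv x s (k - 1))
  have hY := HasMD.pdY_eq
    (f := fun x y k => φ0 x y k - θ x y k * (Ω x y (k - 1))⁻¹ * χ x y (k - 1))
    ((dφ k).sub (((dθ k).mul dW).mul (dχ (k - 1))))
  have dX := ((dθ k).mul dW).mul (dχ (k - 1))
  have hG := HasMD.pdY_eq
    (f := pdX (fun x y k => φ0 x y k - θ x y k * (Ω x y (k - 1))⁻¹ * χ x y (k - 1)))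
    (x := x) (y := y) (k := k) (by
      simp only [hX]
      exact (((hasMD_pdYX hφ0smooth x y k).sub
        ((((((dθ (k + 1)).sub (dθ k)).add
          ((((dφ (k + 1)).sub (dφ k)).mulK K).mul (dθ k))).mul dW).mul (dχ (k - 1))))).sub
        ((((dX.mulK K).mul (dθ k)).mul dW).mul (dχ (k - 1)))).sub
        (((dθ k).mul dW).mul (((dχ (k - 1)).sub (dχ (k - 1 - 1))).sub
          (((dχ (k - 1)).mulK K).mul ((dφ k).sub (dφ (k - 1)))))))
  have s1 := hΩshift x y k
  have s2 := hΩshift x y (k - 1)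
  have y1 := hΩy x y (k - 1)
  have t1 := hθy x y k
  have t2 := hθy x y (k + 1)
  have c1 := hχy x y (k - 1)
  have c2 := hχy x y (k - 1 - 1)
  simp only [sub_add_cancel, add_sub_cancel_right] at y1 t2 c1 c2
  rw [y1] at hG hY
  have e1 : k + 1 - 1 = k := add_sub_cancel_right k 1
  beta_reduce
  rw [e1]
  refine darboux_algebra K (φ0 x y (k - 1)) (φ0 x y k) (φ0 x y (k + 1))
    (pdY φ0 x y (k - 1)) (pdY φ0 x y k) (pdY φ0 x y (k + 1))
    (θ x y (k - 1)) (θ x y k) (θ x y (k + 1)) (χ x y (k - 1 - 1)) (χ x y (k - 1)) (χ x y k)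
    (Ω x y (k - 1 - 1))⁻¹ (Ω x y (k - 1))⁻¹ (Ω x y k)⁻¹ ?_ ?_ _ _ _ _ _ _ _ _
    (hφ0 x y k) t1 t2 c1 c2 rfl hG hY
  · have e : χ x y k * (K * θ x y k) = Ω x y (k - 1) - Ω x y k := by
      rw [← Matrix.mul_assoc, ← neg_sub, s1, neg_neg]
    calc _ = (Ω x y k)⁻¹ * (χ x y k * (K * θ x y k)) * (Ω x y (k - 1))⁻¹ := by
          simp only [Matrix.mul_assoc]
      _ = _ := by
          rw [e, Matrix.mul_sub, Matrix.sub_mul, Matrix.nonsing_inv_mul _ (hu x y k),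
            Matrix.mul_assoc, Matrix.mul_nonsing_inv _ (hu x y (k - 1)), Matrix.mul_one,
            Matrix.one_mul]
  · have e : χ x y (k - 1) * (K * θ x y (k - 1)) = Ω x y (k - 1 - 1) - Ω x y (k - 1) := by
      rw [← Matrix.mul_assoc, ← neg_sub (Ω x y (k - 1)), s2, neg_neg]
    calc _ = (Ω x y (k - 1))⁻¹ * (χ x y (k - 1) * (K * θ x y (k - 1)))
            * (Ω x y (k - 1 - 1))⁻¹ := by
          simp only [Matrix.mul_assoc]
      _ = _ := by
          rw [e, Matrix.mul_sub, Matrix.sub_mul, Matrix.nonsing_inv_mul _ (hu x y (k - 1)),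
            Matrix.mul_assoc, Matrix.mul_nonsing_inv _ (hu x y (k - 1 - 1)), Matrix.mul_one,
            Matrix.one_mul]
end

section
/- Let N be a positive integer, p_1,…,p_N, q_1,…,q_N positive reals with p_j ≠ q_i for all i, j, ξ_1,…,ξ_N ∈ ℝ^m column vectors, η_1,…,η_N ∈ ℝ^n row vectors (viewed as 1×n), K an n×m real matrix, and κ_{ij} = η_i K ξ_j. For p > 0 define ϑ(p)(x,y,k) = p x − p^{-1} y + k log p, and ϑ(p)⁺ means k replaced by k+1. Set ϑ_{i,1} = ϑ(p_i)⁺, ϑ_{i,2} = ϑ(q_i), and for I = (a_1,…,a_N) ∈ {1,2}^N set ϑ_I = Σ_i ϑ_{i,a_i}. Let Ω be the N×N matrix with entries Ω_{ij} = δ_{ij} + (κ_{ij}(q_j−p_j)/(q_i−p_j)) e^{ϑ(p_j)⁺ − ϑ(q_i)}, let P = diag(p_1,…,p_N), Q = diag(q_1,…,q_N), θ_1 = (ξ_1,…,ξ_N)(Q−P) (an m×N matrix), χ_1 the N×n matrix with rows η_1,…,η_N, and define τ = e^{ϑ_𝟐} det Ω and F = −e^{ϑ_𝟐} θ_1 diag(e^{ϑ(p_i)⁺})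 adj(Ω) diag(e^{−ϑ(q_i)}) χ_1, where 𝟐 = (2,…,2) and adj denotes the adjugate. Then there exist real constants μ_I and constant m×n real matrices M_I, for I ∈ {1,2}^N, independent of (x,y,k), such that for all (x,y,k) ∈ ℝ²×ℤ: τ = Σ_{I∈{1,2}^N} μ_I e^{ϑ_I} and F = Σ_{I∈{1,2}^N} M_I e^{ϑ_I}, with μ_𝟐 = 1 and M_𝟐 = 0. -/
open Matrix

/-- The phase `ϑ(r)(x,y,k) = r x − r⁻¹ y + k log r`. -/
noncomputable def phase (r x y : ℝ) (k : ℤ) : ℝ :=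
  r * x - r⁻¹ * y + (k : ℝ) * Real.log r

/-- `ϑ_I = Σᵢ ϑ_{i,aᵢ}`, where `ϑ_{i,1} = ϑ(pᵢ)⁺` (encoded by `I i = 0`) and
`ϑ_{i,2} = ϑ(qᵢ)` (encoded by `I i = 1`). -/
noncomputable def phaseI {N : ℕ} (p q : Fin N → ℝ) (I : Fin N → Fin 2) (x y : ℝ) (k : ℤ) : ℝ :=
  ∑ i, if I i = 0 then phase (p i) x y (k + 1) else phase (q i) x y k

/-- The matrix `Ω` with entries
`Ω_{ij} = δ_{ij} + (κ_{ij}(qⱼ−pⱼ)/(qᵢ−pⱼ)) e^{ϑ(pⱼ)⁺ − ϑ(qᵢ)}`, where `κ = η K ξ`. -/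
noncomputable def OmegaSol {m n N : ℕ} (K : Matrix (Fin n) (Fin m) ℝ) (p q : Fin N → ℝ)
    (ξ : Matrix (Fin m) (Fin N) ℝ) (η : Matrix (Fin N) (Fin n) ℝ) (x y : ℝ) (k : ℤ) :
    Matrix (Fin N) (Fin N) ℝ :=
  Matrix.of fun i j =>
    (if i = j then (1 : ℝ) else 0) +
      (η * K * ξ) i j * (q j - p j) / (q i - p j) *
        Real.exp (phase (p j) x y (k + 1) - phase (q i) x y k)

/-- The tau function `τ = e^{ϑ_𝟐} det Ω`. -/
noncomputable def tauSol {m n N : ℕ} (K : Matrix (Fin n) (Fin m) ℝ) (p q : Fin N → ℝ)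
    (ξ : Matrix (Fin m) (Fin N) ℝ) (η : Matrix (Fin N) (Fin n) ℝ) (x y : ℝ) (k : ℤ) : ℝ :=
  Real.exp (phaseI p q (fun _ => 1) x y k) * (OmegaSol K p q ξ η x y k).det

/-- `F = −e^{ϑ_𝟐} θ₁ e^{ϑ(P)⁺} adj(Ω) e^{−ϑ(Q)} χ₁`, where `θ₁ = (ξ₁,…,ξ_N)(Q−P)` and
`χ₁` has rows `η₁,…,η_N`. -/
noncomputable def FSol {m n N : ℕ} (K : Matrix (Fin n) (Fin m) ℝ) (p q : Fin N → ℝ)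
    (ξ : Matrix (Fin m) (Fin N) ℝ) (η : Matrix (Fin N) (Fin n) ℝ) (x y : ℝ) (k : ℤ) :
    Matrix (Fin m) (Fin n) ℝ :=
  -(Real.exp (phaseI p q (fun _ => 1) x y k)) •
    (ξ * Matrix.diagonal (fun i => q i - p i) *
      Matrix.diagonal (fun i => Real.exp (phase (p i) x y (k + 1))) *
      (OmegaSol K p q ξ η x y k).adjugate *
      Matrix.diagonal (fun i => Real.exp (-phase (q i) x y k)) * η)


/-- Matrix determinant lemma in adjugate form. -/
lemma det_add_rank_one_adj {N : ℕ} (A : Matrix (Fin N) (Fin N) ℝ) (u v : Fin N → ℝ) :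
    (A + vecMulVec u v).det = A.det + v ⬝ᵥ (A.adjugate *ᵥ u) := by
  have key : (fun t : ℝ => ((A + t • (1 : Matrix (Fin N) (Fin N) ℝ)) + vecMulVec u v).det) =
      fun t : ℝ => (A + t • (1 : Matrix (Fin N) (Fin N) ℝ)).det +
        v ⬝ᵥ ((A + t • (1 : Matrix (Fin N) (Fin N) ℝ)).adjugate *ᵥ u) := by
    have hfin : {t : ℝ | (-A).charpoly.IsRoot t}.Finite :=
      Polynomial.finite_setOfPred_isRoot (Matrix.charpoly_monic _).ne_zero
    have hd := hfin.countable.dense_compl ℝ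
    have hc : Continuous fun t : ℝ => A + t • (1 : Matrix (Fin N) (Fin N) ℝ) := by fun_prop
    refine Continuous.ext_on hd ?_ ?_ ?_
    · exact (hc.add continuous_const).matrix_det
    · refine hc.matrix_det.add ?_
      exact Continuous.dotProduct continuous_const (hc.matrix_adjugate.matrix_mulVec continuous_const)
    · intro t ht
      have hdet : (A + t • (1 : Matrix (Fin N) (Fin N) ℝ)).det ≠ 0 := by
        intro h
        apply ht
        change (-A).charpoly.eval t = 0
        rw [Matrix.eval_charpoly, ← h]
        congr 1
        rw [sub_neg_eq_add, add_comm, Matrix.scalar_apply, Matrix.smul_one_eq_diagonal]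
      change (A + t • (1 : Matrix (Fin N) (Fin N) ℝ) + vecMulVec u v).det = (A + t • (1 : Matrix (Fin N) (Fin N) ℝ)).det + v ⬝ᵥ ((A + t • (1 : Matrix (Fin N) (Fin N) ℝ)).adjugate *ᵥ u)
      generalize A + t • (1 : Matrix (Fin N) (Fin N) ℝ) = B at hdet ⊢
      have h1 := Matrix.det_add_replicateCol_mul_replicateRow (ι := Unit)
        (isUnit_iff_ne_zero.mpr hdet) u v
      rw [vecMulVec_eq Unit, h1, Matrix.det_unique (n := Unit), Matrix.inv_def]
      have : (replicateRow Unit v * (Ring.inverse B.det • B.adjugate) * replicateCol Unit u)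
          default default = B.det⁻¹ * (v ⬝ᵥ (B.adjugate *ᵥ u)) := by
        rw [Matrix.mul_smul, Matrix.smul_mul, Matrix.smul_apply, Matrix.mul_assoc,
          ← Matrix.replicateCol_mulVec, Ring.inverse_eq_inv']
        rfl
      rw [Matrix.add_apply, this, Matrix.one_apply_eq]
      field_simp
  have := congrFun key 0
  simpa using this

/-- Coefficient. -/
noncomputable def cf {N : ℕ} (C : Matrix (Fin N) (Fin N) ℝ) (I : Fin N → Fin 2) : ℝ :=
  (Matrix.of fun j i => if I j = 0 then C i j else if i = j then (1 : ℝ) else 0).det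

lemma cf_two {N : ℕ} (C : Matrix (Fin N) (Fin N) ℝ) : cf C (fun _ => 1) = 1 := by
  unfold cf
  convert Matrix.det_one (n := Fin N) (R := ℝ)
  ext i j
  simp [Matrix.one_apply, eq_comm]

lemma det_expand {N : ℕ} (C : Matrix (Fin N) (Fin N) ℝ) (E G : Fin N → ℝ)
    (hG : ∀ i, G i ≠ 0) :
    (∏ i, G i) * (Matrix.of fun i j => (if i = j then (1 : ℝ) else 0) +
      C i j * (E j / G i)).det
    = ∑ I : Fin N → Fin 2, cf C I * ∏ i, (if I i = 0 then E i else G i) := by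
  rw [← Matrix.det_mul_column, ← Matrix.det_transpose]
  have h : (Matrix.of fun i j => G i * (Matrix.of fun i j => (if i = j then (1 : ℝ) else 0) +
      C i j * (E j / G i)) i j)ᵀ = (fun j => ∑ b : Fin 2,
        (if b = 0 then E j else G j) • 
          (fun i => if b = 0 then C i j else if i = j then (1 : ℝ) else 0) :
        Matrix (Fin N) (Fin N) ℝ) := by
    ext j i
    have := hG i
    by_cases hij : i = j
    · subst hij
      simp
      field_simp
      ring
    · simp [hij]
      field_simp
  rw [h]
  have h2 := (Matrix.detRowAlternating (n := Fin N) (R := ℝ)).toMultilinearMap.map_sum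
    (fun (j : Fin N) (b : Fin 2) => (if b = 0 then E j else G j) • 
          (fun i => if b = 0 then C i j else if i = j then (1 : ℝ) else 0))
  refine h2.trans ?_
  refine Finset.sum_congr rfl fun I _ => ?_
  refine ((Matrix.detRowAlternating (n := Fin N) (R := ℝ)).toMultilinearMap.map_smul_univ
    _ _).trans ?_
  rw [smul_eq_mul, mul_comm]
  rfl

lemma exp_phaseI {N : ℕ} (p q : Fin N → ℝ) (I : Fin N → Fin 2) (x y : ℝ) (k : ℤ) :
    Real.exp (phaseI p q I x y k) = ∏ i, (if I i = 0 then Real.exp (phase (p i) x y (k + 1))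
      else Real.exp (phase (q i) x y k)) := by
  unfold phaseI
  rw [Real.exp_sum]
  refine Finset.prod_congr rfl fun i _ => ?_
  split_ifs <;> rfl

lemma det_expand_phase {N : ℕ} (C : Matrix (Fin N) (Fin N) ℝ) (p q : Fin N → ℝ)
    (x y : ℝ) (k : ℤ) :
    Real.exp (phaseI p q (fun _ => 1) x y k) *
      (Matrix.of fun i j => (if i = j then (1 : ℝ) else 0) +
        C i j * Real.exp (phase (p j) x y (k + 1) - phase (q i) x y k)).det
    = ∑ I : Fin N → Fin 2, cf C I * Real.exp (phaseI p q I x y k) := by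
  have := det_expand C (fun j => Real.exp (phase (p j) x y (k + 1)))
    (fun i => Real.exp (phase (q i) x y k)) (fun i => (Real.exp_pos _).ne')
  simp only [exp_phaseI, Real.exp_sub]
  simpa using this

/-- `τ` and `F` of the pure `N`-soliton solution have expansions
`τ = Σ_I μ_I e^{ϑ_I}` and `F = Σ_I M_I e^{ϑ_I}` with constant coefficients,
`μ_𝟐 = 1` and `M_𝟐 = 0`. -/
theorem tau_F_expansion
    (m n N : ℕ) (hm : 0 < m) (hn : 0 < n) (hN : 0 < N)
    (K : Matrix (Fin n) (Fin m) ℝ)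
    (p q : Fin N → ℝ) (hp : ∀ i, 0 < p i) (hq : ∀ i, 0 < q i)
    (hpq : ∀ i j, p j ≠ q i)
    (ξ : Matrix (Fin m) (Fin N) ℝ) (η : Matrix (Fin N) (Fin n) ℝ) :
    ∃ (μ : (Fin N → Fin 2) → ℝ) (M : (Fin N → Fin 2) → Matrix (Fin m) (Fin n) ℝ),
      μ (fun _ => 1) = 1 ∧ M (fun _ => 1) = 0 ∧
      ∀ (x y : ℝ) (k : ℤ),
        tauSol K p q ξ η x y k
          = ∑ I : Fin N → Fin 2, μ I * Real.exp (phaseI p q I x y k) ∧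
        FSol K p q ξ η x y k
          = ∑ I : Fin N → Fin 2, Real.exp (phaseI p q I x y k) • M I := by
  classical
  let C : Matrix (Fin N) (Fin N) ℝ :=
    Matrix.of fun i j => (η * K * ξ) i j * (q j - p j) / (q i - p j)
  let D : Fin m → Fin n → Matrix (Fin N) (Fin N) ℝ := fun a b =>
    C + vecMulVec (fun i => η i b) (fun j => ξ a j * (q j - p j))
  refine ⟨cf C, fun I => Matrix.of fun a b => cf C I - cf (D a b) I, cf_two C, ?_, ?_⟩
  · ext a b
    simp [cf_two]
  intro x y k
  have hτ : tauSol K p q ξ η x y k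
      = ∑ I : Fin N → Fin 2, cf C I * Real.exp (phaseI p q I x y k) :=
    det_expand_phase C p q x y k
  refine ⟨hτ, ?_⟩
  ext a b
  have hD := det_expand_phase (D a b) p q x y k
  have hΩ : (Matrix.of fun i j => (if i = j then (1 : ℝ) else 0) +
        D a b i j * Real.exp (phase (p j) x y (k + 1) - phase (q i) x y k)) =
      OmegaSol K p q ξ η x y k +
        vecMulVec (fun i => Real.exp (-phase (q i) x y k) * η i b)
          (fun j => ξ a j * (q j - p j) * Real.exp (phase (p j) x y (k + 1))) := by
    ext i j
    simp only [D, C, OmegaSol, Matrix.add_apply, vecMulVec_apply, Matrix.of_apply, sub_eq_add_neg,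
      Real.exp_add]
    ring
  rw [hΩ, det_add_rank_one_adj, mul_add] at hD
  have hF : FSol K p q ξ η x y k a b = -(Real.exp (phaseI p q (fun _ => 1) x y k) *
      ((fun j => ξ a j * (q j - p j) * Real.exp (phase (p j) x y (k + 1))) ⬝ᵥ
        ((OmegaSol K p q ξ η x y k).adjugate *ᵥ
          (fun i => Real.exp (-phase (q i) x y k) * η i b)))) := by
    unfold FSol
    rw [neg_smul, Matrix.neg_apply, Matrix.smul_apply, smul_eq_mul]
    congr 2
    rw [Matrix.mul_assoc, Matrix.mul_assoc, Matrix.mul_apply']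
    congr 1
    · ext j
      simp [Matrix.mul_diagonal]
    · ext i
      rw [Matrix.mul_apply']
      congr 1
      ext j
      simp [Matrix.diagonal_mul]
  rw [hF, Matrix.sum_apply]
  simp only [Matrix.smul_apply, Matrix.of_apply, smul_eq_mul, mul_sub, Finset.sum_sub_distrib]
  simp only [mul_comm (Real.exp (phaseI p q _ x y k)) (cf _ _)]
  rw [← hD, ← hτ]
  unfold tauSol
  ring
end

section
/- Let f : ℝ² × ℤ → ℝ be a twice continuously differentiable (in x, y) solution of the scalar potential two-dimensional Toda lattice equation f_{xy} − f⁺ + 2f − f⁻ = (f⁺ − f) f_y − f_y (f − f⁻), and let P be a constant m×n real matrix satisfying P K P = P, where K is a constant n×m real matrix. Then φ := f·P is a solution of the p2DTL_K equation φ_{xy} − φ⁺ + 2φ − φ⁻ = (φ⁺ − φ) K φ_y − φ_y K (φ − φ⁻). -/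
open Matrix

/-- Partial derivative in `x` of a scalar function on `ℝ² × ℤ`. -/
noncomputable def sdX (f : ℝ → ℝ → ℤ → ℝ) (x y : ℝ) (k : ℤ) : ℝ :=
  deriv (fun s => f s y k) x

/-- Partial derivative in `y` of a scalar function on `ℝ² × ℤ`. -/
noncomputable def sdY (f : ℝ → ℝ → ℤ → ℝ) (x y : ℝ) (k : ℤ) : ℝ :=
  deriv (fun s => f x s k) y

/-- The scalar potential two-dimensional Toda lattice equation
`f_{xy} − f⁺ + 2f − f⁻ = (f⁺ − f) f_y − f_y (f − f⁻)`. -/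
def IsScalarP2DTL (f : ℝ → ℝ → ℤ → ℝ) : Prop :=
  ∀ (x y : ℝ) (k : ℤ),
    sdY (sdX f) x y k - f x y (k + 1) + 2 * f x y k - f x y (k - 1)
      = (f x y (k + 1) - f x y k) * sdY f x y k
        - sdY f x y k * (f x y k - f x y (k - 1))

/-- multiplying a scalar solution of the potential 2DTL equation by a constant
`K`-projection matrix `P` yields a solution of the matrix p2DTL_K equation. -/
theorem scalar_solution_times_projection
    (m n : ℕ) (hm : 0 < m) (hn : 0 < n)
    (K : Matrix (Fin n) (Fin m) ℝ)
    (P : Matrix (Fin m) (Fin n) ℝ) (hP : P * K * P = P)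
    (f : ℝ → ℝ → ℤ → ℝ)
    (hsmooth : ∀ k : ℤ, ContDiff ℝ 2 (fun pt : ℝ × ℝ => f pt.1 pt.2 k))
    (hf : IsScalarP2DTL f) :
    IsP2DTL K (fun x y k => f x y k • P) := by
  have hX : pdX (fun x y k => f x y k • P) = fun x y k => sdX f x y k • P := by
    funext x y k
    ext i j
    simp [pdX, sdX]
  have hY : ∀ g : ℝ → ℝ → ℤ → ℝ,
      pdY (fun x y k => g x y k • P) = fun x y k => sdY g x y k • P := by
    intro g
    funext x y k
    ext i j
    simp [pdY, sdY]
  intro x y k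
  rw [hX, hY, hY]
  have h := congrArg (fun c : ℝ => c • P) (hf x y k)
  simp only [← sub_smul, Matrix.smul_mul, Matrix.mul_smul, hP, smul_smul]
  have h2 : (2 : ℕ) • f x y k • P = (2 * f x y k) • P := by
    rw [mul_smul, two_smul, two_smul]
  rw [h2, ← add_smul, ← sub_smul]
  refine h.trans ?_
  congr 1
  ring
end
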